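/- arXiv:0710.4234 — 3 statements merged into one kernel-verified Lean document; each statement's English description precedes it below -/
import Mathlib

section
/- Suppose: (i) the model is data uniformly relevant (DUR): there exist d, k > 0 such that for all |θ| > k, |∫_ℝ x·π(x | θ) dx| ≤ |θ| − d; (ii) the non-centred parametrisation is geometrically tight in parameter (GTIP): there exist a, b > 0 such that for every θ ∈ ℝ and every t ≥ 0, ∫_{{x : |x − θ| > t}} π(x | θ) dx ≤ a·e^{−b·t}; (iii) f₂ has a finite moment generating function near 0: ∫_ℝ e^{s|t|} f₂(t) dt < ∞ for some s > 0. Then the marginal Θ-chain of the centred Gibbs sampler is geometrically ergodic: there exist r ∈ [0,1) and a function M : ℝ → [0,∞) such that for every θ₀ ∈ ℝ and every n ≥ 1, ‖Pⁿ(θ₀, ·) − Π‖_TV ≤ M(θ₀)·rⁿ. -/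
open MeasureTheory Filter Set

noncomputable section

/-- Joint (unnormalised posterior) density `f_θ(x) = f₁(y - x) · f₂(x - θ)`. -/
def fjoint (f₁ f₂ : ℝ → ℝ) (y θ x : ℝ) : ℝ := f₁ (y - x) * f₂ (x - θ)

/-- Normalising constant `c_θ = ∫ f_θ(x) dx`. -/
def cnorm (f₁ f₂ : ℝ → ℝ) (y θ : ℝ) : ℝ := ∫ x, fjoint f₁ f₂ y θ x

/-- Conditional posterior density `π(x | θ) = f_θ(x)/c_θ`. -/
def post (f₁ f₂ : ℝ → ℝ) (y θ x : ℝ) : ℝ := fjoint f₁ f₂ y θ x / cnorm f₁ f₂ y θ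

/-- One-step transition density of the marginal Θ-chain of the centred Gibbs sampler:
`p(θ₀, θ₁) = (1/c_{θ₀}) ∫ f₂(x - θ₁) f_{θ₀}(x) dx`. -/
def gibbsTrans (f₁ f₂ : ℝ → ℝ) (y θ₀ θ₁ : ℝ) : ℝ :=
  (1 / cnorm f₁ f₂ y θ₀) * ∫ x, f₂ (x - θ₁) * fjoint f₁ f₂ y θ₀ x

/-- `n`-step transition density (for `n ≥ 1`; the value at `n = 0` is unused). -/
def gibbsTransN (f₁ f₂ : ℝ → ℝ) (y : ℝ) : ℕ → ℝ → ℝ → ℝ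
  | 0, _, _ => 0
  | 1, θ₀, θ₁ => gibbsTrans f₁ f₂ y θ₀ θ₁
  | (n + 2), θ₀, θ₁ => ∫ u, gibbsTransN f₁ f₂ y (n + 1) θ₀ u * gibbsTrans f₁ f₂ y u θ₁

/-!
The Harris theorem, with `V θ = cosh (ε θ)` as Lyapunov function. One step of the `Θ`-chain from `θ`
is `X - Z` with `X` distributed as `π(· | θ)` and `Z` independent with density `f₂`. GTIP and the
moment generating function of `f₂` bound `E exp (σ |X - Z - θ|)` uniformly in `θ`. Since `Z` has
mean zero, DUR says that the mean of the step is closer to `0` than `θ` is, by at least `d`, once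
`|θ|` is large; expanding the exponential to second order, this first-order gain `ε d` beats the
`O(ε²)` remainder, so `P V ≤ λ V + K` with `λ < 1`. The transition density is continuous and
positive, so the sublevel sets of `V`, being bounded, are small. Drift and minorisation together
make the chain a strict contraction of the total variation norm weighted by `1 + β V` on signed
densities of zero mass (Hairer–Mattingly), and `c_θ` is stationary by detailed balance.
-/

section TransitionDensity

variable {X : Type*} [MeasurableSpace X]

/-- `q` is the density with respect to `μ` of a probability measure. -/
structure IsProbDensity (μ : Measure X) (q : X → ℝ) : Prop where
  nonneg : ∀ u, 0 ≤ q u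
  integral_eq_one : ∫ u, q u ∂μ = 1

/-- The action on densities of the integral operator with kernel `p`. When `p u` is the density of a
Markov chain started from `u`, this maps the density of the current state to that of the next. -/
def densityPush (μ : Measure X) (p : X → X → ℝ) (g : X → ℝ) (v : X) : ℝ :=
  ∫ u, g u * p u v ∂μ

/-- `p u` is the density with respect to `μ` of one step of a Markov chain started from `u`. -/
structure IsTransitionDensity (μ : Measure X) (p : X → X → ℝ) : Prop where
  stronglyMeasurable : StronglyMeasurable (Function.uncurry p)
  isProbDensity : ∀ u, IsProbDensity μ (p u)

/-- `q` is a stationary probability density of the chain with transition density `p`. -/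
structure IsInvariantDensity (μ : Measure X) (p : X → X → ℝ) (q : X → ℝ) : Prop
    extends IsProbDensity μ q where
  densityPush_ae_eq : densityPush μ p q =ᵐ[μ] q

/-- The Foster–Lyapunov condition `P V ≤ lam * V + K` with contraction factor `lam < 1`. -/
structure GeometricDrift (μ : Measure X) (p : X → X → ℝ) (V : X → ℝ) (lam K : ℝ) : Prop where
  measurable : Measurable V
  nonneg : ∀ u, 0 ≤ V u
  integrable : ∀ u, Integrable (fun v => V v * p u v) μ
  integral_le : ∀ u, ∫ v, V v * p u v ∂μ ≤ lam * V u + K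
  factor_nonneg : 0 ≤ lam
  factor_lt_one : lam < 1
  const_pos : 0 < K

/-- One-step smallness of `C`: the transition densities from points of `C` share a nontrivial
minorant. The minorant `ν` is not normalised. -/
def IsSmallSet (μ : Measure X) (p : X → X → ℝ) (C : Set X) : Prop :=
  ∃ ν : X → ℝ, Integrable ν μ ∧ (∀ v, 0 ≤ ν v) ∧ 0 < ∫ v, ν v ∂μ ∧ ∀ u ∈ C, ∀ v, ν v ≤ p u v

/-- Convergence of the chain to `q` in total variation at a geometric rate; the density after
`n + 1` steps from `x` is `(densityPush μ p)^[n] (p x)`. -/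
def IsGeometricallyErgodic (μ : Measure X) (p : X → X → ℝ) (q : X → ℝ) : Prop :=
  ∃ r : ℝ, 0 < r ∧ r < 1 ∧ ∃ M : X → ℝ, (∀ x, 0 ≤ M x) ∧
    ∀ x n, ∫ v, |(densityPush μ p)^[n] (p x) v - q v| ∂μ ≤ M x * r ^ n

/-- A certificate that the chain contracts `W`-weighted total variation by the factor `ρ`: up to a
function of the target point alone, the kernel `W v * p u v` has mass at most `ρ * W u`. -/
structure IsContractiveWeight (μ : Measure X) (p : X → X → ℝ) (W : X → ℝ) (ρ : ℝ) : Prop where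
  measurable : Measurable W
  integrable : ∀ u, Integrable (fun v => W v * p u v) μ
  exists_integral_le :
    ∃ ν : X → ℝ, Integrable ν μ ∧ ∀ u, ∫ v, |W v * p u v - ν v| ∂μ ≤ ρ * W u

/-- The signed densities of zero total mass and finite `W`-weighted total variation norm. -/
structure IsWeightedMeanZero (μ : Measure X) (W g : X → ℝ) : Prop where
  integrable : Integrable g μ
  integrable_mul : Integrable (fun u => g u * W u) μ
  integral_eq_zero : ∫ u, g u ∂μ = 0

variable {μ : Measure X} {p k : X → X → ℝ} {V W w ν g q φ : X → ℝ} {lam K ρ c : ℝ}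

lemma IsProbDensity.integrable (hq : IsProbDensity μ q) : Integrable q μ :=
  .of_integral_ne_zero (by rw [hq.integral_eq_one]; exact one_ne_zero)

lemma densityPush_congr_ae {h : X → ℝ} (hgh : g =ᵐ[μ] h) :
    densityPush μ p g = densityPush μ p h := by
  ext v
  refine integral_congr_ae ?_
  filter_upwards [hgh] with u hu
  rw [hu]

lemma integrable_prod_mul_of_integral_abs_le [SFinite μ]
    (hk : AEStronglyMeasurable (Function.uncurry k) (μ.prod μ))
    (hki : ∀ u, Integrable (k u) μ)
    (hkw : ∀ u, ∫ v, |k u v| ∂μ ≤ w u) (hg : AEStronglyMeasurable g μ)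
    (hgw : Integrable (fun u => g u * w u) μ) :
    Integrable (fun z : X × X => g z.1 * k z.1 z.2) (μ.prod μ) := by
  have hmeas : AEStronglyMeasurable (fun z : X × X => g z.1 * k z.1 z.2) (μ.prod μ) :=
    hg.comp_fst.mul hk
  refine (integrable_prod_iff hmeas).2 ⟨.of_forall fun u => (hki u).const_mul (g u), ?_⟩
  refine hgw.mono hmeas.norm.integral_prod_right' (.of_forall fun u => ?_)
  have habs : 0 ≤ ∫ v, |k u v| ∂μ := integral_nonneg fun v => abs_nonneg _
  simp only [norm_mul, integral_const_mul, Real.norm_eq_abs, abs_abs]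
  rw [abs_of_nonneg habs, abs_of_nonneg (habs.trans (hkw u))]
  exact mul_le_mul_of_nonneg_left (hkw u) (abs_nonneg _)

lemma integral_abs_densityPush_le [SFinite μ]
    (hk : AEStronglyMeasurable (Function.uncurry k) (μ.prod μ))
    (hki : ∀ u, Integrable (k u) μ)
    (hkw : ∀ u, ∫ v, |k u v| ∂μ ≤ w u) (hg : AEStronglyMeasurable g μ)
    (hgw : Integrable (fun u => g u * w u) μ) :
    ∫ v, |densityPush μ k g v| ∂μ ≤ ∫ u, |g u * w u| ∂μ := by
  have hprod := integrable_prod_mul_of_integral_abs_le hk hki hkw hg hgw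
  calc ∫ v, |densityPush μ k g v| ∂μ
      ≤ ∫ v, ∫ u, |g u * k u v| ∂μ ∂μ :=
        integral_mono hprod.integral_prod_right.abs hprod.abs.integral_prod_right
          fun v => abs_integral_le_integral_abs
    _ = ∫ u, ∫ v, |g u * k u v| ∂μ ∂μ := (integral_integral_swap hprod.abs).symm
    _ ≤ ∫ u, |g u * w u| ∂μ := by
        refine integral_mono hprod.abs.integral_prod_left hgw.abs fun u => ?_
        simp only [abs_mul, integral_const_mul]
        exact mul_le_mul_of_nonneg_left ((hkw u).trans (le_abs_self _)) (abs_nonneg _)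

namespace IsTransitionDensity

lemma nonneg (hp : IsTransitionDensity μ p) (u v : X) : 0 ≤ p u v :=
  (hp.isProbDensity u).nonneg v

lemma integral_eq_one (hp : IsTransitionDensity μ p) (u : X) : ∫ v, p u v ∂μ = 1 :=
  (hp.isProbDensity u).integral_eq_one

lemma integrable (hp : IsTransitionDensity μ p) (u : X) : Integrable (p u) μ :=
  (hp.isProbDensity u).integrable

lemma integral_abs (hp : IsTransitionDensity μ p) (u : X) : ∫ v, |p u v| ∂μ = 1 := by
  simp only [abs_of_nonneg (hp.nonneg u _), hp.integral_eq_one]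

lemma aestronglyMeasurable_mul (hp : IsTransitionDensity μ p)
    (hφ : Measurable φ) :
    AEStronglyMeasurable (Function.uncurry fun u v => φ v * p u v) (μ.prod μ) :=
  ((hφ.stronglyMeasurable.comp_measurable measurable_snd).mul
    hp.stronglyMeasurable).aestronglyMeasurable

variable [SFinite μ]

lemma integrable_prod (hp : IsTransitionDensity μ p) (hg : Integrable g μ) :
    Integrable (fun z : X × X => g z.1 * p z.1 z.2) (μ.prod μ) :=
  integrable_prod_mul_of_integral_abs_le (w := 1) hp.stronglyMeasurable.aestronglyMeasurable
    hp.integrable (fun u => (hp.integral_abs u).le) hg.aestronglyMeasurable (by simpa using hg)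

lemma integrable_densityPush (hp : IsTransitionDensity μ p) (hg : Integrable g μ) :
    Integrable (densityPush μ p g) μ :=
  (hp.integrable_prod hg).integral_prod_right

lemma integral_densityPush (hp : IsTransitionDensity μ p) (hg : Integrable g μ) :
    ∫ v, densityPush μ p g v ∂μ = ∫ u, g u ∂μ := by
  unfold densityPush
  rw [← integral_integral_swap (hp.integrable_prod hg)]
  simp only [integral_const_mul, hp.integral_eq_one, mul_one]

lemma densityPush_sub_ae_eq (hp : IsTransitionDensity μ p) {h : X → ℝ}
    (hg : Integrable g μ) (hh : Integrable h μ) :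
    densityPush μ p (g - h) =ᵐ[μ] densityPush μ p g - densityPush μ p h := by
  filter_upwards [(hp.integrable_prod hg).prod_left_ae, (hp.integrable_prod hh).prod_left_ae]
    with v hgv hhv
  simp only [densityPush, Pi.sub_apply, sub_mul]
  exact integral_sub hgv hhv

lemma integrable_iterate_densityPush (hp : IsTransitionDensity μ p) (hg : Integrable g μ) (n : ℕ) :
    Integrable ((densityPush μ p)^[n] g) μ := by
  induction n with
  | zero => exact hg
  | succ n ih =>
    rw [Function.iterate_succ_apply']
    exact hp.integrable_densityPush ih

end IsTransitionDensity

lemma IsInvariantDensity.iterate_densityPush_sub_ae_eq [SFinite μ]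
    (hq : IsInvariantDensity μ p q) (hp : IsTransitionDensity μ p) (hg : Integrable g μ) (n : ℕ) :
    (densityPush μ p)^[n] (g - q) =ᵐ[μ] (densityPush μ p)^[n] g - q := by
  induction n with
  | zero => rfl
  | succ n ih =>
    rw [Function.iterate_succ_apply', Function.iterate_succ_apply', densityPush_congr_ae ih]
    exact (hp.densityPush_sub_ae_eq (hp.integrable_iterate_densityPush hg n) hq.integrable).trans
      (EventuallyEq.rfl.sub hq.densityPush_ae_eq)

section Contraction

variable [SFinite μ]

-- Because `g` has mean zero, subtracting from the kernel a function of `v` alone does not change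
-- its action on `g`.
lemma IsWeightedMeanZero.densityPush_mul_ae_eq (hg : IsWeightedMeanZero μ W g)
    (hp : IsTransitionDensity μ p) (ν : X → ℝ) :
    (fun v => densityPush μ p g v * W v) =ᵐ[μ]
      densityPush μ (fun u v => W v * p u v - ν v) g := by
  filter_upwards [(hp.integrable_prod hg.integrable).prod_left_ae] with v hv
  calc densityPush μ p g v * W v
      = (∫ u, g u * p u v ∂μ) * W v - (∫ u, g u ∂μ) * ν v := by
        rw [hg.integral_eq_zero, zero_mul, sub_zero, densityPush]
    _ = ∫ u, (g u * p u v * W v - g u * ν v) ∂μ := by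
        rw [integral_sub (hv.mul_const _) (hg.integrable.mul_const _), integral_mul_const,
          integral_mul_const]
    _ = densityPush μ (fun u v => W v * p u v - ν v) g v :=
        integral_congr_ae (.of_forall fun u => by ring)

lemma IsWeightedMeanZero.contraction (hg : IsWeightedMeanZero μ W g)
    (hp : IsTransitionDensity μ p) (hW : IsContractiveWeight μ p W ρ) :
    IsWeightedMeanZero μ W (densityPush μ p g) ∧
      ∫ v, |densityPush μ p g v * W v| ∂μ ≤ |ρ| * ∫ u, |g u * W u| ∂μ := by
  obtain ⟨ν, hν, hcontr⟩ := hW.exists_integral_le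
  have hkm : AEStronglyMeasurable (Function.uncurry fun u v => W v * p u v - ν v) (μ.prod μ) :=
    (hp.aestronglyMeasurable_mul hW.measurable).sub hν.aestronglyMeasurable.comp_snd
  have hki : ∀ u, Integrable (fun v => W v * p u v - ν v) μ := fun u => (hW.integrable u).sub hν
  have hgρ : Integrable (fun u => g u * (ρ * W u)) μ :=
    (hg.integrable_mul.const_mul ρ).congr (.of_forall fun u => by ring)
  have hpush := hg.densityPush_mul_ae_eq hp ν
  refine ⟨⟨hp.integrable_densityPush hg.integrable, ?_, ?_⟩, ?_⟩
  · exact (integrable_prod_mul_of_integral_abs_le hkm hki hcontr hg.integrable.aestronglyMeasurable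
      hgρ).integral_prod_right.congr hpush.symm
  · rw [hp.integral_densityPush hg.integrable, hg.integral_eq_zero]
  · calc ∫ v, |densityPush μ p g v * W v| ∂μ
        = ∫ v, |densityPush μ (fun u v => W v * p u v - ν v) g v| ∂μ :=
          integral_congr_ae (hpush.fun_comp abs)
      _ ≤ ∫ u, |g u * (ρ * W u)| ∂μ :=
          integral_abs_densityPush_le hkm hki hcontr hg.integrable.aestronglyMeasurable hgρ
      _ = |ρ| * ∫ u, |g u * W u| ∂μ := by
          rw [← integral_const_mul]
          refine integral_congr_ae (.of_forall fun u => ?_)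
          simp only [mul_left_comm _ ρ, abs_mul]

lemma IsWeightedMeanZero.iterate_contraction (hg : IsWeightedMeanZero μ W g)
    (hp : IsTransitionDensity μ p) (hW : IsContractiveWeight μ p W ρ) (n : ℕ) :
    IsWeightedMeanZero μ W ((densityPush μ p)^[n] g) ∧
      ∫ v, |(densityPush μ p)^[n] g v * W v| ∂μ ≤ |ρ| ^ n * ∫ u, |g u * W u| ∂μ := by
  induction n with
  | zero => exact ⟨hg, by simp⟩
  | succ n ih =>
    obtain ⟨hmean, hnorm⟩ := ih
    rw [Function.iterate_succ_apply']
    obtain ⟨hmean', hnorm'⟩ := hmean.contraction hp hW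
    refine ⟨hmean', hnorm'.trans ?_⟩
    calc |ρ| * ∫ v, |(densityPush μ p)^[n] g v * W v| ∂μ
        ≤ |ρ| * (|ρ| ^ n * ∫ u, |g u * W u| ∂μ) := by gcongr
      _ = |ρ| ^ (n + 1) * ∫ u, |g u * W u| ∂μ := by ring

end Contraction

section Drift

lemma GeometricDrift.le_weight_mul (hV : GeometricDrift μ p V lam K)
    (hp : IsTransitionDensity μ p) {β : ℝ} (hβ : 0 ≤ β) (u v : X) :
    p u v ≤ (1 + β * V v) * p u v :=
  le_mul_of_one_le_left (hp.nonneg u v) (le_add_of_nonneg_right (mul_nonneg hβ (hV.nonneg v)))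

lemma GeometricDrift.integrable_weight (hV : GeometricDrift μ p V lam K)
    (hp : IsTransitionDensity μ p) (β : ℝ) (u : X) :
    Integrable (fun v => (1 + β * V v) * p u v) μ :=
  ((hp.integrable u).add ((hV.integrable u).const_mul β)).congr
    (.of_forall fun v => by simp only [Pi.add_apply]; ring)

lemma GeometricDrift.integral_weight_le (hV : GeometricDrift μ p V lam K)
    (hp : IsTransitionDensity μ p) {β : ℝ} (hβ : 0 ≤ β) (u : X) :
    ∫ v, (1 + β * V v) * p u v ∂μ ≤ 1 + β * (lam * V u + K) := by
  calc ∫ v, (1 + β * V v) * p u v ∂μ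
      = ∫ v, (p u v + β * (V v * p u v)) ∂μ := integral_congr_ae (.of_forall fun v => by ring)
    _ = 1 + β * ∫ v, V v * p u v ∂μ := by
        rw [integral_add (hp.integrable u) ((hV.integrable u).const_mul β), integral_const_mul,
          hp.integral_eq_one]
    _ ≤ 1 + β * (lam * V u + K) := by gcongr; exact hV.integral_le u

lemma GeometricDrift.integral_abs_weight_sub_le (hV : GeometricDrift μ p V lam K)
    (hp : IsTransitionDensity μ p) {β : ℝ} (hβ : 0 ≤ β) (hν : Integrable ν μ)
    (hν0 : ∀ v, 0 ≤ ν v) (u : X) :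
    ∫ v, |(1 + β * V v) * p u v - ν v| ∂μ ≤ 1 + β * (lam * V u + K) + ∫ v, ν v ∂μ := by
  have hWp := hV.integrable_weight hp β u
  calc ∫ v, |(1 + β * V v) * p u v - ν v| ∂μ
      ≤ ∫ v, ((1 + β * V v) * p u v + ν v) ∂μ :=
        integral_mono (hWp.sub hν).abs (hWp.add hν) fun v =>
          (abs_sub _ _).trans_eq <| by
            rw [abs_of_nonneg ((hp.nonneg u v).trans (hV.le_weight_mul hp hβ u v)),
              abs_of_nonneg (hν0 v)]
    _ ≤ 1 + β * (lam * V u + K) + ∫ v, ν v ∂μ := by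
        rw [integral_add hWp hν]
        gcongr
        exact hV.integral_weight_le hp hβ u

lemma GeometricDrift.integral_abs_weight_sub_le_of_minorant (hV : GeometricDrift μ p V lam K)
    (hp : IsTransitionDensity μ p) {β : ℝ} (hβ : 0 ≤ β) (hν : Integrable ν μ) {u : X}
    (hνp : ∀ v, ν v ≤ p u v) :
    ∫ v, |(1 + β * V v) * p u v - ν v| ∂μ ≤ 1 + β * (lam * V u + K) - ∫ v, ν v ∂μ := by
  calc ∫ v, |(1 + β * V v) * p u v - ν v| ∂μ
      = ∫ v, ((1 + β * V v) * p u v - ν v) ∂μ := integral_congr_ae (.of_forall fun v =>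
        abs_of_nonneg (sub_nonneg.2 ((hνp v).trans (hV.le_weight_mul hp hβ u v))))
    _ ≤ 1 + β * (lam * V u + K) - ∫ v, ν v ∂μ := by
        rw [integral_sub (hV.integrable_weight hp β u) hν]
        gcongr
        exact hV.integral_weight_le hp hβ u

-- Where `V` is small, subtracting the minorant `ν` gains its mass `∫ ν`, which beats `β * K`; where
-- `V` is large the drift alone gains enough to afford losing `∫ ν`.
lemma GeometricDrift.exists_isContractiveWeight (hV : GeometricDrift μ p V lam K)
    (hp : IsTransitionDensity μ p) (hsmall : IsSmallSet μ p {u | V u ≤ 8 * K / (1 - lam)}) :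
    ∃ β ρ : ℝ, 0 < β ∧ 0 < ρ ∧ ρ < 1 ∧ IsContractiveWeight μ p (fun u => 1 + β * V u) ρ := by
  obtain ⟨ν, hνi, hν0, hα, hνp⟩ := hsmall
  set α := ∫ v, ν v ∂μ
  have hK := hV.const_pos
  have hlam0 := hV.factor_nonneg
  have hlam : 0 < 1 - lam := sub_pos.2 hV.factor_lt_one
  obtain ⟨β, hβ, hβK⟩ : ∃ β, 0 < β ∧ β * K = α / 2 :=
    ⟨α / (2 * K), by positivity, by field_simp⟩
  set ρ := max (1 - α / 2) ((1 + lam) / 2)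
  have hρα : 1 - α / 2 ≤ ρ := le_max_left _ _
  have hρlam : (1 + lam) / 2 ≤ ρ := le_max_right _ _
  refine ⟨β, ρ, hβ, by linarith, max_lt (by linarith) (by linarith),
    (hV.measurable.const_mul β).const_add 1, hV.integrable_weight hp β, ν, hνi, fun u => ?_⟩
  have hVu : 0 ≤ β * V u := mul_nonneg hβ.le (hV.nonneg u)
  rcases le_or_gt (V u) (8 * K / (1 - lam)) with hu | hu
  · refine (hV.integral_abs_weight_sub_le_of_minorant hp hβ.le hνi (hνp u hu)).trans ?_
    nlinarith [mul_nonneg (show 0 ≤ ρ - lam by linarith) hVu]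
  · refine (hV.integral_abs_weight_sub_le hp hβ.le hνi hν0 u).trans ?_
    have hR : 8 * K ≤ V u * (1 - lam) := ((div_lt_iff₀ hlam).1 hu).le
    nlinarith [mul_le_mul_of_nonneg_right (show (1 - lam) / 2 ≤ ρ - lam by linarith) hVu,
      mul_le_mul_of_nonneg_left hR hβ.le]

end Drift

section Stationary

lemma IsTransitionDensity.integrable_bdd_mul (hp : IsTransitionDensity μ p) (hφ : Measurable φ)
    (hφc : ∀ v, |φ v| ≤ c) (u : X) : Integrable (fun v => φ v * p u v) μ :=
  (hp.integrable u).bdd_mul hφ.aestronglyMeasurable (.of_forall hφc)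

lemma GeometricDrift.integral_min_mul_le (hV : GeometricDrift μ p V lam K)
    (hp : IsTransitionDensity μ p) (n : ℝ) (u : X)
    (hmin : Integrable (fun v => min (V v) n * p u v) μ) :
    ∫ v, min (V v) n * p u v ∂μ ≤ min (lam * V u + K) n := by
  refine le_min ?_ ?_
  · refine (integral_mono hmin (hV.integrable u) fun v => ?_).trans (hV.integral_le u)
    exact mul_le_mul_of_nonneg_right (min_le_left _ _) (hp.nonneg u v)
  · calc ∫ v, min (V v) n * p u v ∂μ ≤ ∫ v, n * p u v ∂μ :=
          integral_mono hmin ((hp.integrable u).const_mul n) fun v =>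
            mul_le_mul_of_nonneg_right (min_le_right _ _) (hp.nonneg u v)
      _ = n := by rw [integral_const_mul, hp.integral_eq_one, mul_one]

lemma GeometricDrift.indicator_le_sub_integral_min (hV : GeometricDrift μ p V lam K)
    (hp : IsTransitionDensity μ p) (n : ℝ) (u : X)
    (hmin : Integrable (fun v => min (V v) n * p u v) μ) :
    (1 - lam) * {u | V u ≤ n}.indicator V u ≤
      min (V u) n - (∫ v, min (V v) n * p u v ∂μ) + K := by
  have hP := hV.integral_min_mul_le hp n u hmin
  rcases le_or_gt (V u) n with hu | hu
  · rw [indicator_of_mem (show u ∈ {u | V u ≤ n} from hu), min_eq_left hu]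
    linarith [hP.trans (min_le_left _ _)]
  · rw [indicator_of_notMem (show u ∉ {u | V u ≤ n} from hu.not_ge), min_eq_right hu.le]
    linarith [hP.trans (min_le_right _ _), hV.const_pos]

variable [SFinite μ]

lemma IsTransitionDensity.integrable_prod_bdd_mul (hp : IsTransitionDensity μ p)
    (hg : Integrable g μ) (hφ : Measurable φ) (hφc : ∀ v, |φ v| ≤ c) :
    Integrable (fun z : X × X => g z.1 * (φ z.2 * p z.1 z.2)) (μ.prod μ) :=
  ((hp.integrable_prod hg).bdd_mul (hφ.comp measurable_snd).aestronglyMeasurable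
    (.of_forall fun z => hφc z.2)).congr (.of_forall fun _ => mul_left_comm _ _ _)

lemma IsInvariantDensity.integral_mul_eq (hq : IsInvariantDensity μ p q)
    (hp : IsTransitionDensity μ p) (hφ : Measurable φ) (hφc : ∀ v, |φ v| ≤ c) :
    ∫ v, q v * φ v ∂μ = ∫ u, q u * ∫ v, φ v * p u v ∂μ ∂μ := by
  calc ∫ v, q v * φ v ∂μ = ∫ v, densityPush μ p q v * φ v ∂μ :=
        integral_congr_ae (hq.densityPush_ae_eq.symm.mul .rfl)
    _ = ∫ v, ∫ u, q u * (φ v * p u v) ∂μ ∂μ := by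
        simp only [densityPush, ← integral_mul_const, mul_assoc, mul_comm (φ _)]
    _ = ∫ u, q u * ∫ v, φ v * p u v ∂μ ∂μ := by
        rw [← integral_integral_swap (hp.integrable_prod_bdd_mul hq.integrable hφ hφc)]
        simp only [integral_const_mul]

-- Stationarity gives `∫ q (φ - P φ) = 0` for the truncation `φ = min V n`, and
-- `φ - P φ ≥ (1 - lam) * V * 1_{V ≤ n} - K`.
lemma GeometricDrift.setIntegral_mul_le (hV : GeometricDrift μ p V lam K)
    (hp : IsTransitionDensity μ p) (hq : IsInvariantDensity μ p q) {n : ℝ} (hn : 0 ≤ n)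
    (hqV : IntegrableOn (fun u => q u * V u) {u | V u ≤ n} μ) :
    (1 - lam) * ∫ u in {u | V u ≤ n}, q u * V u ∂μ ≤ K := by
  have hS : MeasurableSet {u | V u ≤ n} := measurableSet_le hV.measurable measurable_const
  have hφ : Measurable fun v => min (V v) n := hV.measurable.min measurable_const
  have hφn : ∀ v, |min (V v) n| ≤ n := fun v => by
    rw [abs_of_nonneg (le_min (hV.nonneg v) hn)]
    exact min_le_right _ _
  have hqφ : Integrable (fun u => q u * min (V u) n) μ :=
    hq.integrable.mul_bdd hφ.aestronglyMeasurable (.of_forall hφn)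
  have hqPφ : Integrable (fun u => q u * ∫ v, min (V v) n * p u v ∂μ) μ := by
    simpa only [integral_const_mul] using
      (hp.integrable_prod_bdd_mul hq.integrable hφ hφn).integral_prod_left
  have hpoint : ∀ u, (1 - lam) * {u | V u ≤ n}.indicator (fun u => q u * V u) u ≤
      q u * min (V u) n - q u * (∫ v, min (V v) n * p u v ∂μ) + K * q u := fun u => by
    rw [indicator_mul_right]
    linarith [mul_le_mul_of_nonneg_left (hV.indicator_le_sub_integral_min hp n u
      (hp.integrable_bdd_mul hφ hφn u)) (hq.nonneg u)]
  calc (1 - lam) * ∫ u in {u | V u ≤ n}, q u * V u ∂μ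
      ≤ ∫ u, (q u * min (V u) n - q u * (∫ v, min (V v) n * p u v ∂μ) + K * q u) ∂μ := by
        rw [← integral_indicator hS, ← integral_const_mul]
        exact integral_mono ((hqV.integrable_indicator hS).const_mul _)
          ((hqφ.sub hqPφ).add (hq.integrable.const_mul K)) hpoint
    _ = K := by
        rw [integral_add, integral_sub hqφ hqPφ, hq.integral_mul_eq hp hφ hφn, integral_const_mul,
          hq.integral_eq_one, sub_self, zero_add, mul_one]
        exacts [hqφ.sub hqPφ, hq.integrable.const_mul K]

lemma GeometricDrift.integrable_mul_of_isInvariantDensity (hV : GeometricDrift μ p V lam K)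
    (hp : IsTransitionDensity μ p) (hq : IsInvariantDensity μ p q) :
    Integrable (fun u => q u * V u) μ := by
  have hmeas : AEStronglyMeasurable (fun u => q u * V u) μ :=
    hq.integrable.aestronglyMeasurable.mul hV.measurable.aestronglyMeasurable
  have hS : ∀ n : ℕ, MeasurableSet {u | V u ≤ n} := fun n =>
    measurableSet_le hV.measurable measurable_const
  have hcover : AECover μ atTop fun n : ℕ => {u | V u ≤ n} :=
    ⟨.of_forall fun u => tendsto_natCast_atTop_atTop.eventually_ge_atTop (V u), hS⟩
  have hon : ∀ n : ℕ, IntegrableOn (fun u => q u * V u) {u | V u ≤ n} μ := fun n =>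
    (hq.integrable.mul_const (n : ℝ)).integrableOn.mono' hmeas.restrict <|
      (ae_restrict_mem (hS n)).mono fun u hu => by
        rw [Real.norm_eq_abs, abs_of_nonneg (mul_nonneg (hq.nonneg u) (hV.nonneg u))]
        exact mul_le_mul_of_nonneg_left hu (hq.nonneg u)
  refine hcover.integrable_of_integral_norm_bounded (K / (1 - lam)) hon (.of_forall fun n => ?_)
  simp only [Real.norm_eq_abs, abs_of_nonneg (mul_nonneg (hq.nonneg _) (hV.nonneg _))]
  rw [le_div_iff₀' (sub_pos.2 hV.factor_lt_one)]
  exact hV.setIntegral_mul_le hp hq n.cast_nonneg (hon n)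

lemma IsInvariantDensity.isWeightedMeanZero_sub (hq : IsInvariantDensity μ p q)
    (hp : IsTransitionDensity μ p) (hV : GeometricDrift μ p V lam K) (β : ℝ) (x : X) :
    IsWeightedMeanZero μ (fun u => 1 + β * V u) (p x - q) where
  integrable := (hp.integrable x).sub hq.integrable
  integrable_mul := by
    have hqW : Integrable (fun u => q u + β * (q u * V u)) μ :=
      hq.integrable.add ((hV.integrable_mul_of_isInvariantDensity hp hq).const_mul β)
    exact ((hV.integrable_weight hp β x).sub hqW).congr
      (.of_forall fun u => by simp only [Pi.sub_apply]; ring)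
  integral_eq_zero := by
    rw [integral_sub' (hp.integrable x) hq.integrable, hp.integral_eq_one, hq.integral_eq_one,
      sub_self]

end Stationary

theorem GeometricDrift.isGeometricallyErgodic [SFinite μ] (hV : GeometricDrift μ p V lam K)
    (hp : IsTransitionDensity μ p) (hsmall : ∀ R, IsSmallSet μ p {u | V u ≤ R})
    (hq : IsInvariantDensity μ p q) : IsGeometricallyErgodic μ p q := by
  obtain ⟨β, ρ, hβ, hρ, hρ1, hW⟩ := hV.exists_isContractiveWeight hp (hsmall _)
  set W : X → ℝ := fun u => 1 + β * V u
  have hW1 : ∀ u, 1 ≤ W u := fun u => le_add_of_nonneg_right (mul_nonneg hβ.le (hV.nonneg u))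
  refine ⟨ρ, hρ, hρ1, fun x => ∫ u, |(p x - q) u * W u| ∂μ,
    fun x => integral_nonneg fun u => abs_nonneg _, fun x n => ?_⟩
  obtain ⟨hmean, hnorm⟩ := (hq.isWeightedMeanZero_sub hp hV β x).iterate_contraction hp hW n
  calc ∫ v, |(densityPush μ p)^[n] (p x) v - q v| ∂μ
      = ∫ v, |(densityPush μ p)^[n] (p x - q) v| ∂μ := integral_congr_ae
        ((hq.iterate_densityPush_sub_ae_eq hp (hp.integrable x) n).symm.fun_comp abs)
    _ ≤ ∫ v, |(densityPush μ p)^[n] (p x - q) v * W v| ∂μ :=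
        integral_mono hmean.integrable.abs hmean.integrable_mul.abs fun v => by
          simp only [abs_mul]
          exact le_mul_of_one_le_right (abs_nonneg _) ((hW1 v).trans (le_abs_self _))
    _ ≤ (∫ u, |(p x - q) u * W u| ∂μ) * ρ ^ n := by rwa [mul_comm, ← abs_of_pos hρ]

lemma IsProbDensity.isInvariantDensity_of_detailed_balance (hq : IsProbDensity μ q)
    (hp : IsTransitionDensity μ p) (hbal : ∀ u v, q u * p u v = q v * p v u) :
    IsInvariantDensity μ p q where
  toIsProbDensity := hq
  densityPush_ae_eq := .of_forall fun v => by
    simp only [densityPush, hbal _ v, integral_const_mul, hp.integral_eq_one, mul_one]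

end TransitionDensity

section ExponentialMoments

lemma exp_mul_le_quadratic {σ η : ℝ} (hσ : 0 < σ) (hη : |η| ≤ σ / 2) (z : ℝ) :
    Real.exp (η * z) ≤ 1 + η * z + η ^ 2 * (8 / σ ^ 2 * Real.exp (σ * |z|)) := by
  have htaylor : Real.exp (η * z) - (1 + η * z) ≤ (η * z) ^ 2 * Real.exp |η * z| := by
    have h := Complex.norm_exp_sub_sum_le_norm_mul_exp ((η * z : ℝ) : ℂ) 2
    have hsum : Complex.exp ((η * z : ℝ) : ℂ) -
        ∑ m ∈ Finset.range 2, ((η * z : ℝ) : ℂ) ^ m / m.factorial =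
        ((Real.exp (η * z) - (1 + η * z) : ℝ) : ℂ) := by
      simp [Finset.sum_range_succ]
    rw [hsum, Complex.norm_real, Complex.norm_real, Real.norm_eq_abs, Real.norm_eq_abs,
      sq_abs] at h
    exact (le_abs_self _).trans h
  have hexp : Real.exp |η * z| ≤ Real.exp (σ / 2 * |z|) := by rw [abs_mul]; gcongr
  have hsq : z ^ 2 ≤ 8 / σ ^ 2 * Real.exp (σ / 2 * |z|) := by
    have h := Real.quadratic_le_exp_of_nonneg (x := σ / 2 * |z|) (by positivity)
    rw [mul_pow, sq_abs] at h
    rw [div_mul_eq_mul_div, le_div_iff₀ (by positivity)]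
    nlinarith [mul_nonneg hσ.le (abs_nonneg z)]
  have hprod : z ^ 2 * Real.exp |η * z| ≤ 8 / σ ^ 2 * Real.exp (σ * |z|) := by
    calc z ^ 2 * Real.exp |η * z|
        ≤ 8 / σ ^ 2 * Real.exp (σ / 2 * |z|) * Real.exp (σ / 2 * |z|) := by gcongr
      _ = 8 / σ ^ 2 * Real.exp (σ * |z|) := by
          rw [mul_assoc, ← Real.exp_add, ← add_mul, add_halves]
  linarith [mul_le_mul_of_nonneg_left hprod (sq_nonneg η)]

lemma exp_mul_le_exp_mul_abs {σ η : ℝ} (hη : |η| ≤ σ) (z : ℝ) :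
    Real.exp (η * z) ≤ Real.exp (σ * |z|) := by
  refine Real.exp_le_exp.2 ?_
  calc η * z ≤ |η| * |z| := by rw [← abs_mul]; exact le_abs_self _
    _ ≤ σ * |z| := by gcongr

lemma lintegral_exp_sub_one_le_of_tail {Ω : Type*} [MeasurableSpace Ω] {P : Measure Ω}
    [IsFiniteMeasure P] {Y : Ω → ℝ} {σ a b : ℝ} (hY : AEMeasurable Y P)
    (ha : 0 ≤ a) (hσ : 0 < σ) (hσb : σ < b)
    (htail : ∀ t, 0 ≤ t → P.real {ω | t < |Y ω|} ≤ a * Real.exp (-b * t)) :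
    ∫⁻ ω, ENNReal.ofReal (Real.exp (σ * |Y ω|) - 1) ∂P ≤ ENNReal.ofReal (a * σ / (b - σ)) := by
  have hneg : σ - b < 0 := by linarith
  have hprim : ∀ s, ∫ t in (0 : ℝ)..s, σ * Real.exp (σ * t) = Real.exp (σ * s) - 1 := fun s => by
    rw [intervalIntegral.integral_const_mul, intervalIntegral.mul_integral_comp_mul_left,
      integral_exp, mul_zero, Real.exp_zero]
  calc ∫⁻ ω, ENNReal.ofReal (Real.exp (σ * |Y ω|) - 1) ∂P
      = ∫⁻ t in Ioi 0, P {ω | t < |Y ω|} * ENNReal.ofReal (σ * Real.exp (σ * t)) := by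
        simp only [← hprim]
        exact lintegral_comp_eq_lintegral_meas_lt_mul P (.of_forall fun ω => abs_nonneg _)
          hY.abs (fun t _ => (by fun_prop : Continuous _).intervalIntegrable _ _)
          (.of_forall fun t => by positivity)
    _ ≤ ∫⁻ t in Ioi 0, ENNReal.ofReal (a * σ * Real.exp ((σ - b) * t)) := by
        refine setLIntegral_mono' measurableSet_Ioi fun t ht => ?_
        calc P {ω | t < |Y ω|} * ENNReal.ofReal (σ * Real.exp (σ * t))
            ≤ ENNReal.ofReal (a * Real.exp (-b * t)) * ENNReal.ofReal (σ * Real.exp (σ * t)) := by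
              gcongr
              rw [← ofReal_measureReal]
              exact ENNReal.ofReal_le_ofReal (htail t (le_of_lt ht))
          _ = ENNReal.ofReal (a * σ * Real.exp ((σ - b) * t)) := by
              rw [← ENNReal.ofReal_mul (by positivity), sub_mul, sub_eq_neg_add, ← neg_mul,
                Real.exp_add]
              ring_nf
    _ = ENNReal.ofReal (a * σ / (b - σ)) := by
        rw [← ofReal_integral_eq_lintegral_ofReal ((integrableOn_exp_mul_Ioi hneg 0).const_mul _)
          (.of_forall fun t => by positivity), integral_const_mul, integral_exp_mul_Ioi hneg,
          mul_zero, Real.exp_zero, ← neg_sub b σ, neg_div_neg_eq, mul_one_div]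

/-- The exponential moment `E exp (σ * |Y|)` is finite and at most `B`. -/
structure ExpMomentLE {Ω : Type*} [MeasurableSpace Ω] (Y : Ω → ℝ) (P : Measure Ω) (σ B : ℝ) :
    Prop where
  aemeasurable : AEMeasurable Y P
  integrable_exp_abs : Integrable (fun ω => Real.exp (σ * |Y ω|)) P
  integral_exp_abs_le : ∫ ω, Real.exp (σ * |Y ω|) ∂P ≤ B

namespace ExpMomentLE

variable {Ω Ω' : Type*} [MeasurableSpace Ω] [MeasurableSpace Ω'] {P : Measure Ω} {Q : Measure Ω'}
  {Y : Ω → ℝ} {Z : Ω' → ℝ} {σ τ η a b B D : ℝ}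

lemma of_tail [IsProbabilityMeasure P] (hY : AEMeasurable Y P) (ha : 0 ≤ a) (hσ : 0 < σ)
    (hσb : σ < b) (htail : ∀ t, 0 ≤ t → P.real {ω | t < |Y ω|} ≤ a * Real.exp (-b * t)) :
    ExpMomentLE Y P σ (1 + a * σ / (b - σ)) := by
  have hmeas : AEMeasurable (fun ω => Real.exp (σ * |Y ω|) - 1) P := by fun_prop
  have hnonneg : ∀ ω, 0 ≤ Real.exp (σ * |Y ω|) - 1 := fun ω =>
    sub_nonneg.2 (Real.one_le_exp (by positivity))
  have hbound := lintegral_exp_sub_one_le_of_tail hY ha hσ hσb htail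
  have hint : Integrable (fun ω => Real.exp (σ * |Y ω|) - 1) P :=
    ⟨hmeas.aestronglyMeasurable, (hasFiniteIntegral_iff_ofReal (.of_forall hnonneg)).2
      (hbound.trans_lt ENNReal.ofReal_lt_top)⟩
  have hexp : Integrable (fun ω => Real.exp (σ * |Y ω|)) P :=
    (hint.add (integrable_const 1)).congr (.of_forall fun ω => sub_add_cancel _ _)
  refine ⟨hY, hexp, ?_⟩
  rw [← sub_le_iff_le_add']
  calc ∫ ω, Real.exp (σ * |Y ω|) ∂P - 1 = ∫ ω, (Real.exp (σ * |Y ω|) - 1) ∂P := by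
        rw [integral_sub hexp (integrable_const 1), integral_const, probReal_univ, one_smul]
    _ ≤ a * σ / (b - σ) := by
        rw [integral_eq_lintegral_of_nonneg_ae (.of_forall hnonneg) hmeas.aestronglyMeasurable]
        exact ENNReal.toReal_le_of_le_ofReal
          (div_nonneg (by positivity) (sub_nonneg.2 hσb.le)) hbound

lemma mono_exponent (h : ExpMomentLE Y P σ B) (hτ : τ ≤ σ) : ExpMomentLE Y P τ B := by
  have hle : ∀ ω, Real.exp (τ * |Y ω|) ≤ Real.exp (σ * |Y ω|) := fun ω => by gcongr
  have hmeas := h.aemeasurable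
  have hint : Integrable (fun ω => Real.exp (τ * |Y ω|)) P :=
    h.integrable_exp_abs.mono' (by fun_prop) (.of_forall fun ω => by
      rw [Real.norm_eq_abs, Real.abs_exp]; exact hle ω)
  exact ⟨hmeas, hint, (integral_mono hint h.integrable_exp_abs hle).trans h.integral_exp_abs_le⟩

lemma one_le [IsProbabilityMeasure P] (h : ExpMomentLE Y P σ B) (hσ : 0 ≤ σ) : 1 ≤ B :=
  calc (1 : ℝ) = ∫ _, 1 ∂P := by simp
    _ ≤ ∫ ω, Real.exp (σ * |Y ω|) ∂P :=
        integral_mono (integrable_const 1) h.integrable_exp_abs fun ω =>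
          Real.one_le_exp (by positivity)
    _ ≤ B := h.integral_exp_abs_le

lemma integrable (h : ExpMomentLE Y P σ B) (hσ : 0 < σ) : Integrable Y P := by
  refine (h.integrable_exp_abs.const_mul σ⁻¹).mono' h.aemeasurable.aestronglyMeasurable
    (.of_forall fun ω => ?_)
  rw [Real.norm_eq_abs, inv_mul_eq_div, le_div_iff₀' hσ]
  linarith [Real.add_one_le_exp (σ * |Y ω|)]

lemma integrable_exp (h : ExpMomentLE Y P σ B) (hη : |η| ≤ σ) :
    Integrable (fun ω => Real.exp (η * Y ω)) P := by
  have hmeas := h.aemeasurable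
  exact h.integrable_exp_abs.mono' (by fun_prop) (.of_forall fun ω => by
    rw [Real.norm_eq_abs, Real.abs_exp]; exact exp_mul_le_exp_mul_abs hη _)

lemma integral_exp_le (h : ExpMomentLE Y P σ B) (hη : |η| ≤ σ) :
    ∫ ω, Real.exp (η * Y ω) ∂P ≤ B :=
  (integral_mono (h.integrable_exp hη) h.integrable_exp_abs fun _ =>
    exp_mul_le_exp_mul_abs hη _).trans h.integral_exp_abs_le

lemma integral_exp_le_quadratic [IsProbabilityMeasure P] (h : ExpMomentLE Y P σ B) (hσ : 0 < σ)
    (hη : |η| ≤ σ / 2) :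
    ∫ ω, Real.exp (η * Y ω) ∂P ≤ 1 + η * ∫ ω, Y ω ∂P + η ^ 2 * (8 / σ ^ 2 * B) := by
  have hlin : Integrable (fun ω => 1 + η * Y ω) P :=
    (integrable_const 1).add ((h.integrable hσ).const_mul η)
  have hquad : Integrable (fun ω => η ^ 2 * (8 / σ ^ 2 * Real.exp (σ * |Y ω|))) P :=
    (h.integrable_exp_abs.const_mul _).const_mul _
  calc ∫ ω, Real.exp (η * Y ω) ∂P
      ≤ ∫ ω, (1 + η * Y ω + η ^ 2 * (8 / σ ^ 2 * Real.exp (σ * |Y ω|))) ∂P :=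
        integral_mono (h.integrable_exp (by linarith)) (hlin.add hquad) fun ω =>
          exp_mul_le_quadratic hσ hη (Y ω)
    _ = 1 + η * ∫ ω, Y ω ∂P + η ^ 2 * (8 / σ ^ 2 * ∫ ω, Real.exp (σ * |Y ω|) ∂P) := by
        rw [integral_add hlin hquad,
          integral_add (integrable_const 1) ((h.integrable hσ).const_mul η), integral_const,
          probReal_univ, one_smul, integral_const_mul, integral_const_mul, integral_const_mul]
    _ ≤ 1 + η * ∫ ω, Y ω ∂P + η ^ 2 * (8 / σ ^ 2 * B) := by
        gcongr
        exact h.integral_exp_abs_le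

lemma sub_prod [SFinite P] [SFinite Q] (hY : ExpMomentLE Y P σ B) (hZ : ExpMomentLE Z Q σ D)
    (hσ : 0 ≤ σ) (hB : 0 ≤ B) :
    ExpMomentLE (fun z : Ω × Ω' => Y z.1 - Z z.2) (P.prod Q) σ (B * D) := by
  have hmeas : AEMeasurable (fun z : Ω × Ω' => Y z.1 - Z z.2) (P.prod Q) :=
    hY.aemeasurable.comp_fst.sub hZ.aemeasurable.comp_snd
  have hle : ∀ z : Ω × Ω', Real.exp (σ * |Y z.1 - Z z.2|) ≤
      Real.exp (σ * |Y z.1|) * Real.exp (σ * |Z z.2|) := fun z => by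
    rw [← Real.exp_add, ← mul_add]
    gcongr
    exact abs_sub _ _
  have hprod := hY.integrable_exp_abs.mul_prod hZ.integrable_exp_abs
  have hint : Integrable (fun z : Ω × Ω' => Real.exp (σ * |Y z.1 - Z z.2|)) (P.prod Q) :=
    hprod.mono' (hmeas.abs.const_mul σ).exp.aestronglyMeasurable (.of_forall fun z => by
      rw [Real.norm_eq_abs, Real.abs_exp]; exact hle z)
  refine ⟨hmeas, hint, (integral_mono hint hprod hle).trans ?_⟩
  rw [integral_prod_mul (fun ω => Real.exp (σ * |Y ω|)) fun ω => Real.exp (σ * |Z ω|)]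
  exact mul_le_mul hY.integral_exp_abs_le hZ.integral_exp_abs_le
    (integral_nonneg fun _ => (Real.exp_pos _).le) hB

lemma map {T : Ω → Ω'} (hT : AEMeasurable T P) (hZ : Measurable Z)
    (h : ExpMomentLE (Z ∘ T) P σ B) : ExpMomentLE Z (P.map T) σ B := by
  have hexp : AEStronglyMeasurable (fun ω => Real.exp (σ * |Z ω|)) (P.map T) := by fun_prop
  refine ⟨hZ.aemeasurable, (integrable_map_measure hexp hT).2 h.integrable_exp_abs, ?_⟩
  rw [integral_map hT hexp]
  exact h.integral_exp_abs_le

end ExpMomentLE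

section CoshDrift

variable {κ : Measure ℝ} {θ σ ε d B : ℝ}

lemma exp_mul_eq_exp_mul_exp_sub (η θ : ℝ) :
    (fun v => Real.exp (η * v)) = fun v => Real.exp (η * θ) * Real.exp (η * (v - θ)) := by
  ext v
  rw [← Real.exp_add]
  ring_nf

lemma ExpMomentLE.integrable_of_sub [IsFiniteMeasure κ] (h : ExpMomentLE (fun v => v - θ) κ σ B)
    (hσ : 0 < σ) : Integrable (fun v => v) κ :=
  ((h.integrable hσ).add (integrable_const θ)).congr (.of_forall fun v => sub_add_cancel v θ)

lemma ExpMomentLE.integrable_exp_of_sub {η : ℝ} (h : ExpMomentLE (fun v => v - θ) κ σ B)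
    (hη : |η| ≤ σ) : Integrable (fun v => Real.exp (η * v)) κ := by
  rw [exp_mul_eq_exp_mul_exp_sub η θ]
  exact (h.integrable_exp hη).const_mul _

lemma ExpMomentLE.integrable_cosh (h : ExpMomentLE (fun v => v - θ) κ σ B) (hε : |ε| ≤ σ) :
    Integrable (fun v => Real.cosh (ε * v)) κ := by
  simp only [Real.cosh_eq, ← neg_mul]
  exact ((h.integrable_exp_of_sub hε).add
    (h.integrable_exp_of_sub ((abs_neg ε).trans_le hε))).div_const 2

lemma ExpMomentLE.integral_cosh_eq (h : ExpMomentLE (fun v => v - θ) κ σ B) (hε : |ε| ≤ σ) :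
    ∫ v, Real.cosh (ε * v) ∂κ =
      (Real.exp (ε * θ) * ∫ v, Real.exp (ε * (v - θ)) ∂κ +
        Real.exp (-ε * θ) * ∫ v, Real.exp (-ε * (v - θ)) ∂κ) / 2 := by
  simp only [Real.cosh_eq, ← neg_mul, integral_div]
  rw [integral_add (h.integrable_exp_of_sub hε)
    (h.integrable_exp_of_sub ((abs_neg ε).trans_le hε))]
  rw [exp_mul_eq_exp_mul_exp_sub ε θ, exp_mul_eq_exp_mul_exp_sub (-ε) θ, integral_const_mul,
    integral_const_mul]

lemma ExpMomentLE.integral_cosh_le (h : ExpMomentLE (fun v => v - θ) κ σ B) (hε : |ε| ≤ σ) :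
    ∫ v, Real.cosh (ε * v) ∂κ ≤ B * Real.cosh (ε * θ) := by
  have hpos := mul_le_mul_of_nonneg_left (h.integral_exp_le hε) (Real.exp_pos (ε * θ)).le
  have hneg := mul_le_mul_of_nonneg_left (h.integral_exp_le ((abs_neg ε).trans_le hε))
    (Real.exp_pos (-ε * θ)).le
  rw [h.integral_cosh_eq hε, Real.cosh_eq, ← neg_mul]
  linarith

-- The sign of `ε` makes `exp (ε * v)` the dominant half of `cosh (ε * v)` at `v = θ`; the mean of
-- `κ` lies closer to `0` than `θ`, which shrinks that half by a first-order term in `ε`.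
lemma ExpMomentLE.integral_cosh_le_of_mul_eq_abs [IsProbabilityMeasure κ]
    (h : ExpMomentLE (fun v => v - θ) κ σ B) (hσ : 0 < σ) (hε : |ε| ≤ σ / 2)
    (hεθ : ε * θ = |ε| * |θ|) (hmean : |∫ v, v ∂κ| ≤ |θ| - d)
    (hεd : |ε| * (8 / σ ^ 2 * B) ≤ d / 2) :
    ∫ v, Real.cosh (ε * v) ∂κ ≤ (1 - |ε| * d / 2) * Real.cosh (ε * θ) + B := by
  have hεσ : |ε| ≤ σ := by linarith
  have hcenter : ∫ v, (v - θ) ∂κ = ∫ v, v ∂κ - θ := by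
    rw [integral_sub (h.integrable_of_sub hσ) (integrable_const θ), integral_const, probReal_univ,
      one_smul]
  have hshift : ε * (∫ v, v ∂κ - θ) ≤ -(|ε| * d) := by
    calc ε * (∫ v, v ∂κ - θ) = ε * ∫ v, v ∂κ - |ε| * |θ| := by rw [mul_sub, hεθ]
      _ ≤ |ε| * |∫ v, v ∂κ| - |ε| * |θ| :=
          sub_le_sub_right ((le_abs_self _).trans_eq (abs_mul _ _)) _
      _ ≤ -(|ε| * d) := by linarith [mul_le_mul_of_nonneg_left hmean (abs_nonneg ε)]
  have hpos : ∫ v, Real.exp (ε * (v - θ)) ∂κ ≤ 1 - |ε| * d / 2 := by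
    have hquad := h.integral_exp_le_quadratic hσ hε
    rw [hcenter, ← sq_abs ε] at hquad
    linarith [mul_le_mul_of_nonneg_left hεd (abs_nonneg ε)]
  have hneg : Real.exp (-ε * θ) * ∫ v, Real.exp (-ε * (v - θ)) ∂κ ≤ B := by
    refine (mul_le_of_le_one_left (integral_nonneg fun v => (Real.exp_pos _).le) ?_).trans
      (h.integral_exp_le ((abs_neg ε).trans_le hεσ))
    rw [Real.exp_le_one_iff, neg_mul, hεθ, Left.neg_nonpos_iff]
    positivity
  have hfactor : 0 ≤ 1 - |ε| * d / 2 :=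
    (integral_nonneg fun v => (Real.exp_pos _).le).trans hpos
  have hB : 0 ≤ B := (integral_nonneg fun v => (Real.exp_pos _).le).trans h.integral_exp_abs_le
  rw [h.integral_cosh_eq hεσ, Real.cosh_eq]
  linarith [mul_le_mul_of_nonneg_left hpos (Real.exp_pos (ε * θ)).le,
    mul_nonneg hfactor (Real.exp_pos (-(ε * θ))).le]

lemma ExpMomentLE.integral_cosh_le_of_abs_mean_le [IsProbabilityMeasure κ]
    (h : ExpMomentLE (fun v => v - θ) κ σ B) (hσ : 0 < σ) (hε : 0 ≤ ε) (hεσ : ε ≤ σ / 2)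
    (hmean : |∫ v, v ∂κ| ≤ |θ| - d) (hεd : ε * (8 / σ ^ 2 * B) ≤ d / 2) :
    ∫ v, Real.cosh (ε * v) ∂κ ≤ (1 - ε * d / 2) * Real.cosh (ε * θ) + B := by
  obtain ⟨η, hη, hηθ⟩ : ∃ η, |η| = ε ∧ η * θ = ε * |θ| := by
    rcases abs_cases θ with ⟨h, -⟩ | ⟨h, -⟩
    · exact ⟨ε, abs_of_nonneg hε, by rw [h]⟩
    · exact ⟨-ε, by rw [abs_neg, abs_of_nonneg hε], by rw [h, neg_mul, mul_neg]⟩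
  have hcosh : ∀ v, Real.cosh (η * v) = Real.cosh (ε * v) := fun v => by
    rw [← Real.cosh_abs, abs_mul, hη, ← Real.cosh_abs (ε * v), abs_mul, abs_of_nonneg hε]
  have hbound := h.integral_cosh_le_of_mul_eq_abs hσ (hη.trans_le hεσ) (by rw [hη, hηθ]) hmean
    (by rwa [hη])
  simpa only [hcosh, hη] using hbound

lemma exists_cosh_drift {κ : ℝ → Measure ℝ} [∀ θ, IsProbabilityMeasure (κ θ)] {k : ℝ}
    (hσ : 0 < σ) (hd : 0 < d) (hexp : ∀ θ, ExpMomentLE (fun v => v - θ) (κ θ) σ B)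
    (hmean : ∀ θ, k < |θ| → |∫ v, v ∂κ θ| ≤ |θ| - d) :
    ∃ ε lam K : ℝ, 0 < ε ∧ 0 ≤ lam ∧ lam < 1 ∧ 0 < K ∧ ∀ θ,
      Integrable (fun v => Real.cosh (ε * v)) (κ θ) ∧
        ∫ v, Real.cosh (ε * v) ∂κ θ ≤ lam * Real.cosh (ε * θ) + K := by
  have hB : 1 ≤ B := (hexp 0).one_le hσ.le
  have hcoef : 0 < 8 / σ ^ 2 * B := by positivity
  obtain ⟨ε, hε, hεσ, hεd, hε1⟩ :
      ∃ ε : ℝ, 0 < ε ∧ ε ≤ σ / 2 ∧ ε * (8 / σ ^ 2 * B) ≤ d / 2 ∧ ε * d ≤ 1 :=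
    ⟨min (σ / 2) (min (d / 2 / (8 / σ ^ 2 * B)) (1 / d)), by positivity, min_le_left _ _,
      (le_div_iff₀ hcoef).1 ((min_le_right _ _).trans (min_le_left _ _)),
      (le_div_iff₀ hd).1 ((min_le_right _ _).trans (min_le_right _ _))⟩
  have hεσ' : |ε| ≤ σ := by rw [abs_of_pos hε]; linarith
  refine ⟨ε, 1 - ε * d / 2, B * Real.cosh (ε * k), hε, by linarith, by linarith [mul_pos hε hd],
    by positivity, fun θ => ⟨(hexp θ).integrable_cosh hεσ', ?_⟩⟩
  rcases le_or_gt |θ| k with hθ | hθ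
  · calc ∫ v, Real.cosh (ε * v) ∂κ θ ≤ B * Real.cosh (ε * θ) := (hexp θ).integral_cosh_le hεσ'
      _ ≤ B * Real.cosh (ε * k) := by
          refine mul_le_mul_of_nonneg_left (Real.cosh_le_cosh.2 ?_) (by positivity)
          rw [abs_mul, abs_mul]
          exact mul_le_mul_of_nonneg_left (hθ.trans (le_abs_self k)) (abs_nonneg ε)
      _ ≤ _ := le_add_of_nonneg_left
          (mul_nonneg (by linarith) (Real.cosh_pos _).le)
  · exact ((hexp θ).integral_cosh_le_of_abs_mean_le hσ hε.le hεσ (hmean θ hθ) hεd).trans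
      (by gcongr; exact le_mul_of_one_le_right (by positivity) (Real.one_le_cosh _))

end CoshDrift

end ExponentialMoments

section DensityLaw

variable {X : Type*} [MeasurableSpace X] {μ : Measure X} {q : X → ℝ}

/-- The law on `X` with density `q` with respect to `μ`; negative values of `q` are cut off at
`0`. -/
def densityLaw (μ : Measure X) (q : X → ℝ) : Measure X :=
  μ.withDensity fun x => ENNReal.ofReal (q x)

namespace IsProbDensity

lemma aemeasurable_ofReal (hq : IsProbDensity μ q) :
    AEMeasurable (fun x => ENNReal.ofReal (q x)) μ :=
  hq.integrable.aemeasurable.ennreal_ofReal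

lemma integral_densityLaw (hq : IsProbDensity μ q) (g : X → ℝ) :
    ∫ x, g x ∂densityLaw μ q = ∫ x, g x * q x ∂μ := by
  rw [densityLaw, integral_withDensity_eq_integral_toReal_smul₀ hq.aemeasurable_ofReal
    (.of_forall fun x => ENNReal.ofReal_lt_top)]
  simp only [ENNReal.toReal_ofReal (hq.nonneg _), smul_eq_mul, mul_comm]

lemma integrable_densityLaw_iff (hq : IsProbDensity μ q) {g : X → ℝ} :
    Integrable g (densityLaw μ q) ↔ Integrable (fun x => g x * q x) μ := by
  rw [densityLaw, integrable_withDensity_iff_integrable_smul₀' hq.aemeasurable_ofReal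
    (.of_forall fun x => ENNReal.ofReal_lt_top)]
  simp only [ENNReal.toReal_ofReal (hq.nonneg _), smul_eq_mul, mul_comm]

lemma measureReal_densityLaw (hq : IsProbDensity μ q) {s : Set X} (hs : MeasurableSet s) :
    (densityLaw μ q).real s = ∫ x in s, q x ∂μ := by
  rw [measureReal_def, densityLaw, withDensity_apply _ hs,
    integral_eq_lintegral_of_nonneg_ae (.of_forall hq.nonneg)
      hq.integrable.aestronglyMeasurable.restrict]

lemma isProbabilityMeasure_densityLaw (hq : IsProbDensity μ q) :
    IsProbabilityMeasure (densityLaw μ q) where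
  measure_univ := by
    rw [densityLaw, withDensity_apply _ .univ, Measure.restrict_univ,
      ← ofReal_integral_eq_lintegral_ofReal hq.integrable (.of_forall hq.nonneg),
      hq.integral_eq_one, ENNReal.ofReal_one]

end IsProbDensity

end DensityLaw

section DifferenceLaw

/-- The density of `X - Z` for independent `X` of law `P` and `Z` of density `f`. -/
def diffDensity (P : Measure ℝ) (f : ℝ → ℝ) (v : ℝ) : ℝ := ∫ x, f (x - v) ∂P

lemma map_sub_prod_withDensity (P : Measure ℝ) [SFinite P] {g : ℝ → ENNReal} (hg : Measurable g)
    [SFinite (volume.withDensity g)] :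
    (P.prod (volume.withDensity g)).map (fun z => z.1 - z.2) =
      volume.withDensity fun v => ∫⁻ x, g (x - v) ∂P := by
  refine Measure.ext_of_lintegral _ fun φ hφ => ?_
  have hφg : Measurable (Function.uncurry fun x v => g (x - v) * φ v) := by fun_prop
  calc ∫⁻ v, φ v ∂(P.prod (volume.withDensity g)).map (fun z => z.1 - z.2)
      = ∫⁻ x, ∫⁻ t, φ (x - t) ∂volume.withDensity g ∂P := by
        rw [lintegral_map hφ (by fun_prop), lintegral_prod _ (by fun_prop)]
    _ = ∫⁻ x, (∫⁻ v, g (x - v) * φ v) ∂P := by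
        refine lintegral_congr fun x => ?_
        rw [lintegral_withDensity_eq_lintegral_mul _ hg (by fun_prop),
          ← lintegral_sub_left_eq_self _ x]
        simp only [Pi.mul_apply, sub_sub_cancel]
    _ = ∫⁻ v, φ v ∂volume.withDensity fun v => ∫⁻ x, g (x - v) ∂P := by
        rw [lintegral_lintegral_swap hφg.aemeasurable,
          lintegral_withDensity_eq_lintegral_mul _ (by fun_prop) hφ]
        refine lintegral_congr fun v => ?_
        rw [Pi.mul_apply, lintegral_mul_const _ (by fun_prop)]

variable {P : Measure ℝ} {f : ℝ → ℝ} {θ σ B D : ℝ}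

lemma densityLaw_diffDensity [SFinite P] (hf : IsProbDensity volume f) (hfm : Measurable f)
    (hfP : ∀ v, Integrable (fun x => f (x - v)) P) :
    densityLaw volume (diffDensity P f) =
      (P.prod (densityLaw volume f)).map fun z => z.1 - z.2 := by
  have := hf.isProbabilityMeasure_densityLaw
  unfold densityLaw at *
  rw [map_sub_prod_withDensity P hfm.ennreal_ofReal]
  congr with v
  exact ofReal_integral_eq_lintegral_ofReal (hfP v) (.of_forall fun x => hf.nonneg _)

lemma isProbDensity_diffDensity [IsProbabilityMeasure P] (hf : IsProbDensity volume f)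
    (hfm : Measurable f) (hfP : ∀ v, Integrable (fun x => f (x - v)) P) :
    IsProbDensity volume (diffDensity P f) := by
  have := hf.isProbabilityMeasure_densityLaw
  have hnonneg : ∀ v, 0 ≤ diffDensity P f v := fun v => integral_nonneg fun x => hf.nonneg _
  have hmeas : StronglyMeasurable (diffDensity P f) :=
    StronglyMeasurable.integral_prod_right (f := fun v x => f (x - v))
      (hfm.comp (measurable_snd.sub measurable_fst)).stronglyMeasurable
  refine ⟨hnonneg, ?_⟩
  rw [integral_eq_lintegral_of_nonneg_ae (.of_forall hnonneg) hmeas.aestronglyMeasurable,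
    ← setLIntegral_univ, ← withDensity_apply _ .univ, ← densityLaw,
    densityLaw_diffDensity hf hfm hfP,
    Measure.map_apply (by fun_prop) .univ, preimage_univ, measure_univ,
    ENNReal.toReal_one]

variable {Q : Measure ℝ} [IsProbabilityMeasure P] [IsProbabilityMeasure Q]

lemma integral_map_sub_prod (hP : Integrable (fun x => x) P) (hQ : Integrable (fun t => t) Q) :
    ∫ v, v ∂(P.prod Q).map (fun z => z.1 - z.2) = ∫ x, x ∂P - ∫ t, t ∂Q := by
  rw [integral_map (by fun_prop) (by fun_prop),
    integral_sub (hP.comp_fst Q) (hQ.comp_snd P),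
    integral_fun_fst (fun x : ℝ => x), integral_fun_snd (fun x : ℝ => x), probReal_univ,
    probReal_univ, one_smul, one_smul]

lemma ExpMomentLE.map_sub_prod (hP : ExpMomentLE (fun x => x - θ) P σ B)
    (hQ : ExpMomentLE (fun t => t) Q σ D) (hσ : 0 ≤ σ) :
    ExpMomentLE (fun v => v - θ) ((P.prod Q).map fun z => z.1 - z.2) σ (B * D) := by
  refine ExpMomentLE.map (by fun_prop) (by fun_prop) ?_
  have hcomp : (fun v => v - θ) ∘ (fun z : ℝ × ℝ => z.1 - z.2) = fun z => z.1 - θ - z.2 :=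
    funext fun z => sub_right_comm _ _ _
  rw [hcomp]
  exact hP.sub_prod hQ hσ (zero_le_one.trans (hP.one_le hσ))

end DifferenceLaw

section SmallSets

variable {X : Type*} [MeasurableSpace X] {μ : Measure X} {p : X → X → ℝ} {C S T : Set X}

lemma IsSmallSet.mono (hS : IsSmallSet μ p S) (hCS : C ⊆ S) : IsSmallSet μ p C := by
  obtain ⟨ν, hν, hν0, hνpos, hνp⟩ := hS
  exact ⟨ν, hν, hν0, hνpos, fun u hu => hνp u (hCS hu)⟩

lemma isSmallSet_of_isCompact [TopologicalSpace X] [T2Space X] [BorelSpace X]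
    [IsFiniteMeasureOnCompacts μ] (hp : Continuous (Function.uncurry p)) (hpos : ∀ u v, 0 < p u v)
    (hS : IsCompact S) (hT : IsCompact T) (hTpos : μ T ≠ 0) : IsSmallSet μ p S := by
  obtain ⟨α, hα, hαp⟩ := (hS.prod hT).exists_forall_le' hp.continuousOn fun z _ => hpos z.1 z.2
  refine ⟨T.indicator fun _ => α, (integrable_indicator_iff hT.measurableSet).2
    (integrableOn_const hT.measure_ne_top), fun v => indicator_nonneg (fun _ _ => hα.le) v, ?_,
    fun u hu v => indicator_le' (fun v hv => hαp (u, v) ⟨hu, hv⟩) (fun v _ => (hpos u v).le) v⟩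
  rw [integral_indicator_const α hT.measurableSet]
  exact mul_pos (ENNReal.toReal_pos hTpos hT.measure_ne_top) hα

lemma setOf_cosh_mul_le_subset_Icc {ε : ℝ} (hε : 0 < ε) (R : ℝ) :
    {u : ℝ | Real.cosh (ε * u) ≤ R} ⊆ Icc (-(R / ε)) (R / ε) := fun u hu => by
  refine abs_le.1 ((le_div_iff₀' hε).2 ?_)
  calc ε * |u| = |ε * u| := by rw [abs_mul, abs_of_pos hε]
    _ ≤ Real.sinh |ε * u| := Real.self_le_sinh_iff.2 (abs_nonneg _)
    _ ≤ Real.cosh |ε * u| := (Real.sinh_lt_cosh _).le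
    _ = Real.cosh (ε * u) := Real.cosh_abs _
    _ ≤ R := hu

lemma isSmallSet_setOf_cosh_mul_le {p : ℝ → ℝ → ℝ} (hp : Continuous (Function.uncurry p))
    (hpos : ∀ u v, 0 < p u v) {ε : ℝ} (hε : 0 < ε) (R : ℝ) :
    IsSmallSet volume p {u | Real.cosh (ε * u) ≤ R} :=
  (isSmallSet_of_isCompact hp hpos isCompact_Icc (isCompact_Icc (a := (0 : ℝ)) (b := 1))
    (by simp)).mono (setOf_cosh_mul_le_subset_Icc hε R)

end SmallSets

lemma IsTransitionDensity.exists_geometricDrift_cosh {p : ℝ → ℝ → ℝ} {σ B d k : ℝ}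
    (hp : IsTransitionDensity volume p) (hσ : 0 < σ) (hd : 0 < d)
    (hexp : ∀ θ, ExpMomentLE (fun v => v - θ) (densityLaw volume (p θ)) σ B)
    (hmean : ∀ θ, k < |θ| → |∫ v, v ∂densityLaw volume (p θ)| ≤ |θ| - d) :
    ∃ ε lam K, 0 < ε ∧ GeometricDrift volume p (fun v => Real.cosh (ε * v)) lam K := by
  have := fun θ => (hp.isProbDensity θ).isProbabilityMeasure_densityLaw
  obtain ⟨ε, lam, K, hε, hlam0, hlam1, hK, hdrift⟩ := exists_cosh_drift hσ hd hexp hmean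
  refine ⟨ε, lam, K, hε, by fun_prop, fun v => (Real.cosh_pos _).le, fun θ => ?_, fun θ => ?_,
    hlam0, hlam1, hK⟩
  · exact (hp.isProbDensity θ).integrable_densityLaw_iff.1 (hdrift θ).1
  · rw [← (hp.isProbDensity θ).integral_densityLaw]
    exact (hdrift θ).2

lemma integral_pos_of_forall_pos {Ω : Type*} [MeasurableSpace Ω] {P : Measure Ω} [NeZero P]
    {g : Ω → ℝ} (hg : Integrable g P) (hpos : ∀ ω, 0 < g ω) : 0 < ∫ ω, g ω ∂P := by
  have hsupp : Function.support g = univ := eq_univ_of_forall fun ω => (hpos ω).ne'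
  rw [integral_pos_iff_support_of_nonneg (fun ω => (hpos ω).le) hg, hsupp]
  exact Measure.measure_univ_pos.2 (NeZero.ne P)

lemma integral_mul_eq_zero_of_even {f : ℝ → ℝ} (hf : ∀ t, f (-t) = f t) : ∫ t, t * f t = 0 := by
  have hodd : ∫ t, t * f t = -∫ t, t * f t := by
    rw [← integral_neg, ← integral_neg_eq_self]
    simp only [hf, neg_mul]
  linarith

section GibbsModel

/-- The noise densities of the hierarchical model `Y = X + Z₁`, `X = Θ + Z₂`: `Z₁` has density `f₁`
and `Z₂` has the continuous, bounded and positive density `f₂`. -/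
structure IsGibbsModel (f₁ f₂ : ℝ → ℝ) : Prop where
  isProbDensity_left : IsProbDensity volume f₁
  isProbDensity_right : IsProbDensity volume f₂
  continuous : Continuous f₂
  pos : ∀ t, 0 < f₂ t
  bddAbove : ∃ M, ∀ t, f₂ t ≤ M

/-- The law of `X` given `Y = y`, with `Θ` integrated out against the flat prior. -/
def likelihoodLaw (f₁ : ℝ → ℝ) (y : ℝ) : Measure ℝ := densityLaw volume fun x => f₁ (y - x)

/-- The conditional law `π(· | θ)` of `X` given `Θ = θ` and `Y = y`. -/
def postLaw (f₁ f₂ : ℝ → ℝ) (y θ : ℝ) : Measure ℝ := densityLaw volume (post f₁ f₂ y θ)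

/-- The joint density `c_u * p(u, v)` of two consecutive states of the stationary `Θ`-chain: both
are conditionally independent draws of `Θ` given the same `X`. -/
def gibbsPairDensity (f₁ f₂ : ℝ → ℝ) (y u v : ℝ) : ℝ :=
  ∫ x, f₂ (x - u) * f₂ (x - v) ∂likelihoodLaw f₁ y

namespace IsGibbsModel

variable {f₁ f₂ : ℝ → ℝ} {y θ σ B D a b d k s : ℝ}

lemma isProbDensity_likelihood (h : IsGibbsModel f₁ f₂) (y : ℝ) :
    IsProbDensity volume fun x => f₁ (y - x) :=
  ⟨fun x => h.isProbDensity_left.nonneg _, by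
    rw [integral_sub_left_eq_self, h.isProbDensity_left.integral_eq_one]⟩

lemma isProbabilityMeasure_likelihoodLaw (h : IsGibbsModel f₁ f₂) (y : ℝ) :
    IsProbabilityMeasure (likelihoodLaw f₁ y) :=
  (h.isProbDensity_likelihood y).isProbabilityMeasure_densityLaw

lemma exists_norm_le (h : IsGibbsModel f₁ f₂) : ∃ M, ∀ t, ‖f₂ t‖ ≤ M := by
  obtain ⟨M, hM⟩ := h.bddAbove
  exact ⟨M, fun t => by rw [Real.norm_of_nonneg (h.pos t).le]; exact hM t⟩

lemma integrable_comp_sub (h : IsGibbsModel f₁ f₂) (P : Measure ℝ) [IsFiniteMeasure P] (v : ℝ) :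
    Integrable (fun x => f₂ (x - v)) P := by
  obtain ⟨M, hM⟩ := h.exists_norm_le
  exact .of_bound (h.continuous.comp (continuous_sub_right v)).aestronglyMeasurable M
    (.of_forall fun x => hM _)

lemma continuous_diffDensity (h : IsGibbsModel f₁ f₂) (P : Measure ℝ) [IsFiniteMeasure P] :
    Continuous (diffDensity P f₂) := by
  obtain ⟨M, hM⟩ := h.exists_norm_le
  have hf := h.continuous
  exact continuous_of_dominated (fun v => by fun_prop) (fun v => .of_forall fun x => hM _)
    (integrable_const M) (.of_forall fun x => by fun_prop)

lemma diffDensity_pos (h : IsGibbsModel f₁ f₂) (P : Measure ℝ) [IsProbabilityMeasure P] (v : ℝ) :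
    0 < diffDensity P f₂ v :=
  integral_pos_of_forall_pos (h.integrable_comp_sub P v) fun _ => h.pos _

lemma cnorm_eq_diffDensity (h : IsGibbsModel f₁ f₂) (y : ℝ) :
    cnorm f₁ f₂ y = diffDensity (likelihoodLaw f₁ y) f₂ := by
  ext θ
  rw [diffDensity, likelihoodLaw, (h.isProbDensity_likelihood y).integral_densityLaw]
  simp only [cnorm, fjoint, mul_comm]

lemma isProbDensity_cnorm (h : IsGibbsModel f₁ f₂) (y : ℝ) :
    IsProbDensity volume (cnorm f₁ f₂ y) := by
  have := h.isProbabilityMeasure_likelihoodLaw y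
  rw [h.cnorm_eq_diffDensity]
  exact isProbDensity_diffDensity h.isProbDensity_right h.continuous.measurable
    (h.integrable_comp_sub _)

lemma cnorm_pos (h : IsGibbsModel f₁ f₂) (y θ : ℝ) : 0 < cnorm f₁ f₂ y θ := by
  have := h.isProbabilityMeasure_likelihoodLaw y
  rw [h.cnorm_eq_diffDensity]
  exact h.diffDensity_pos _ θ

lemma isProbDensity_post (h : IsGibbsModel f₁ f₂) (y θ : ℝ) :
    IsProbDensity volume (post f₁ f₂ y θ) where
  nonneg x := div_nonneg
    (mul_nonneg (h.isProbDensity_left.nonneg _) (h.isProbDensity_right.nonneg _))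
    (h.cnorm_pos y θ).le
  integral_eq_one := by
    simp only [post, integral_div]
    exact div_self (h.cnorm_pos y θ).ne'

lemma isProbabilityMeasure_postLaw (h : IsGibbsModel f₁ f₂) (y θ : ℝ) :
    IsProbabilityMeasure (postLaw f₁ f₂ y θ) :=
  (h.isProbDensity_post y θ).isProbabilityMeasure_densityLaw

lemma gibbsTrans_eq_diffDensity (h : IsGibbsModel f₁ f₂) (y θ : ℝ) :
    gibbsTrans f₁ f₂ y θ = diffDensity (postLaw f₁ f₂ y θ) f₂ := by
  ext v
  rw [diffDensity, postLaw, (h.isProbDensity_post y θ).integral_densityLaw]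
  simp only [gibbsTrans, post, mul_div_assoc', integral_div, one_div_mul_eq_div]

lemma isProbDensity_gibbsTrans (h : IsGibbsModel f₁ f₂) (y θ : ℝ) :
    IsProbDensity volume (gibbsTrans f₁ f₂ y θ) := by
  have := h.isProbabilityMeasure_postLaw y θ
  rw [h.gibbsTrans_eq_diffDensity]
  exact isProbDensity_diffDensity h.isProbDensity_right h.continuous.measurable
    (h.integrable_comp_sub _)

lemma densityLaw_gibbsTrans (h : IsGibbsModel f₁ f₂) (y θ : ℝ) :
    densityLaw volume (gibbsTrans f₁ f₂ y θ) =
      ((postLaw f₁ f₂ y θ).prod (densityLaw volume f₂)).map fun z => z.1 - z.2 := by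
  have := h.isProbabilityMeasure_postLaw y θ
  rw [h.gibbsTrans_eq_diffDensity]
  exact densityLaw_diffDensity h.isProbDensity_right h.continuous.measurable
    (h.integrable_comp_sub _)

lemma cnorm_mul_gibbsTrans (h : IsGibbsModel f₁ f₂) (y u v : ℝ) :
    cnorm f₁ f₂ y u * gibbsTrans f₁ f₂ y u v = gibbsPairDensity f₁ f₂ y u v := by
  rw [gibbsTrans, ← mul_assoc, mul_one_div_cancel (h.cnorm_pos y u).ne', one_mul,
    gibbsPairDensity, likelihoodLaw, (h.isProbDensity_likelihood y).integral_densityLaw]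
  refine integral_congr_ae (.of_forall fun x => ?_)
  simp only [fjoint]
  ring

lemma continuous_gibbsPairDensity (h : IsGibbsModel f₁ f₂) (y : ℝ) :
    Continuous (Function.uncurry (gibbsPairDensity f₁ f₂ y)) := by
  have := h.isProbabilityMeasure_likelihoodLaw y
  have hf := h.continuous
  obtain ⟨M, hM⟩ := h.exists_norm_le
  exact continuous_of_dominated (fun z => by fun_prop)
    (fun z => .of_forall fun x => norm_mul_le_of_le (hM _) (hM _)) (integrable_const (M * M))
    (.of_forall fun x => by fun_prop)

lemma gibbsPairDensity_pos (h : IsGibbsModel f₁ f₂) (y u v : ℝ) :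
    0 < gibbsPairDensity f₁ f₂ y u v := by
  have := h.isProbabilityMeasure_likelihoodLaw y
  obtain ⟨M, hM⟩ := h.exists_norm_le
  exact integral_pos_of_forall_pos ((h.integrable_comp_sub _ v).bdd_mul
    (h.integrable_comp_sub _ u).aestronglyMeasurable (.of_forall fun x => hM _))
    fun x => mul_pos (h.pos _) (h.pos _)

lemma gibbsTrans_pos (h : IsGibbsModel f₁ f₂) (y u v : ℝ) : 0 < gibbsTrans f₁ f₂ y u v :=
  pos_of_mul_pos_right (by rw [h.cnorm_mul_gibbsTrans]; exact h.gibbsPairDensity_pos y u v)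
    (h.cnorm_pos y u).le

lemma continuous_gibbsTrans (h : IsGibbsModel f₁ f₂) (y : ℝ) :
    Continuous (Function.uncurry (gibbsTrans f₁ f₂ y)) := by
  have := h.isProbabilityMeasure_likelihoodLaw y
  have hcnorm : Continuous (cnorm f₁ f₂ y) := by
    rw [h.cnorm_eq_diffDensity]
    exact h.continuous_diffDensity _
  refine ((h.continuous_gibbsPairDensity y).div (hcnorm.comp continuous_fst)
    fun z => (h.cnorm_pos y z.1).ne').congr fun z => ?_
  exact (eq_div_of_mul_eq (h.cnorm_pos y z.1).ne'
    ((mul_comm _ _).trans (h.cnorm_mul_gibbsTrans y z.1 z.2))).symm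

lemma isTransitionDensity_gibbsTrans (h : IsGibbsModel f₁ f₂) (y : ℝ) :
    IsTransitionDensity volume (gibbsTrans f₁ f₂ y) :=
  ⟨(h.continuous_gibbsTrans y).stronglyMeasurable, h.isProbDensity_gibbsTrans y⟩

lemma isInvariantDensity_cnorm (h : IsGibbsModel f₁ f₂) (y : ℝ) :
    IsInvariantDensity volume (gibbsTrans f₁ f₂ y) (cnorm f₁ f₂ y) :=
  (h.isProbDensity_cnorm y).isInvariantDensity_of_detailed_balance
    (h.isTransitionDensity_gibbsTrans y) fun u v => by
      simp only [h.cnorm_mul_gibbsTrans, gibbsPairDensity, mul_comm]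

lemma expMomentLE_right (h : IsGibbsModel f₁ f₂)
    (hs : Integrable fun t => Real.exp (s * |t|) * f₂ t) :
    ExpMomentLE (fun t => t) (densityLaw volume f₂) s (∫ t, Real.exp (s * |t|) * f₂ t) :=
  ⟨aemeasurable_id, h.isProbDensity_right.integrable_densityLaw_iff.2 hs,
    (h.isProbDensity_right.integral_densityLaw fun t => Real.exp (s * |t|)).le⟩

lemma expMomentLE_postLaw (h : IsGibbsModel f₁ f₂) (ha : 0 ≤ a) (hσ : 0 < σ) (hσb : σ < b)
    (htail : ∀ t, 0 ≤ t →
      ∫ x in {x | t < |x - θ|}, post f₁ f₂ y θ x ≤ a * Real.exp (-b * t)) :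
    ExpMomentLE (fun x => x - θ) (postLaw f₁ f₂ y θ) σ (1 + a * σ / (b - σ)) := by
  have := h.isProbabilityMeasure_postLaw y θ
  refine .of_tail (by fun_prop) ha hσ hσb fun t ht => ?_
  rw [postLaw, (h.isProbDensity_post y θ).measureReal_densityLaw
    (measurableSet_lt (by fun_prop) (by fun_prop))]
  exact htail t ht

lemma expMomentLE_gibbsTrans (h : IsGibbsModel f₁ f₂) (hσ : 0 ≤ σ)
    (hpost : ExpMomentLE (fun x => x - θ) (postLaw f₁ f₂ y θ) σ B)
    (hright : ExpMomentLE (fun t => t) (densityLaw volume f₂) σ D) :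
    ExpMomentLE (fun v => v - θ) (densityLaw volume (gibbsTrans f₁ f₂ y θ)) σ (B * D) := by
  have := h.isProbabilityMeasure_postLaw y θ
  have := h.isProbDensity_right.isProbabilityMeasure_densityLaw
  rw [h.densityLaw_gibbsTrans]
  exact hpost.map_sub_prod hright hσ

lemma integral_gibbsTrans_eq_integral_post (h : IsGibbsModel f₁ f₂) (hσ : 0 < σ)
    (hpost : ExpMomentLE (fun x => x - θ) (postLaw f₁ f₂ y θ) σ B)
    (hright : ExpMomentLE (fun t => t) (densityLaw volume f₂) σ D)
    (hzero : ∫ t, t * f₂ t = 0) :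
    ∫ v, v ∂densityLaw volume (gibbsTrans f₁ f₂ y θ) = ∫ x, x * post f₁ f₂ y θ x := by
  have := h.isProbabilityMeasure_postLaw y θ
  have := h.isProbDensity_right.isProbabilityMeasure_densityLaw
  rw [h.densityLaw_gibbsTrans,
    integral_map_sub_prod (hpost.integrable_of_sub hσ) (hright.integrable hσ),
    h.isProbDensity_right.integral_densityLaw, hzero, sub_zero, postLaw,
    (h.isProbDensity_post y θ).integral_densityLaw]

theorem isGeometricallyErgodic_gibbsTrans (h : IsGibbsModel f₁ f₂) (hσ : 0 < σ) (hd : 0 < d)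
    (hpost : ∀ θ, ExpMomentLE (fun x => x - θ) (postLaw f₁ f₂ y θ) σ B)
    (hright : ExpMomentLE (fun t => t) (densityLaw volume f₂) σ D)
    (hzero : ∫ t, t * f₂ t = 0)
    (hmean : ∀ θ, k < |θ| → |∫ x, x * post f₁ f₂ y θ x| ≤ |θ| - d) :
    IsGeometricallyErgodic volume (gibbsTrans f₁ f₂ y) (cnorm f₁ f₂ y) := by
  have hp := h.isTransitionDensity_gibbsTrans y
  obtain ⟨ε, lam, K, hε, hdrift⟩ := hp.exists_geometricDrift_cosh hσ hd
    (fun θ => h.expMomentLE_gibbsTrans hσ.le (hpost θ) hright) fun θ hθ => by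
      rw [h.integral_gibbsTrans_eq_integral_post hσ (hpost θ) hright hzero]
      exact hmean θ hθ
  exact hdrift.isGeometricallyErgodic hp
    (isSmallSet_setOf_cosh_mul_le (h.continuous_gibbsTrans y) (h.gibbsTrans_pos y) hε)
    (h.isInvariantDensity_cnorm y)

end IsGibbsModel

lemma gibbsTransN_succ (f₁ f₂ : ℝ → ℝ) (y θ₀ : ℝ) (n : ℕ) :
    gibbsTransN f₁ f₂ y (n + 1) θ₀ =
      (densityPush volume (gibbsTrans f₁ f₂ y))^[n] (gibbsTrans f₁ f₂ y θ₀) := by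
  induction n with
  | zero => rfl
  | succ n ih =>
    rw [Function.iterate_succ_apply', ← ih]
    rfl

lemma IsGeometricallyErgodic.integral_abs_gibbsTransN_sub_le {f₁ f₂ q : ℝ → ℝ} {y : ℝ}
    (h : IsGeometricallyErgodic volume (gibbsTrans f₁ f₂ y) q) :
    ∃ r : ℝ, 0 ≤ r ∧ r < 1 ∧ ∃ M : ℝ → ℝ, (∀ θ₀, 0 ≤ M θ₀) ∧ ∀ θ₀ : ℝ, ∀ n : ℕ, 1 ≤ n →
      ∫ θ, |gibbsTransN f₁ f₂ y n θ₀ θ - q θ| ≤ M θ₀ * r ^ n := by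
  obtain ⟨r, hr, hr1, M, hM, hbound⟩ := h
  refine ⟨r, hr.le, hr1, fun θ₀ => M θ₀ / r, fun θ₀ => div_nonneg (hM θ₀) hr.le, ?_⟩
  intro θ₀ n hn
  obtain ⟨m, rfl⟩ := Nat.exists_eq_add_of_le' hn
  rw [gibbsTransN_succ, pow_succ', ← mul_assoc, div_mul_cancel₀ _ hr.ne']
  exact hbound θ₀ m

end GibbsModel

theorem dur_gtip_mgf_implies_geometrically_ergodic_general (f₁ f₂ : ℝ → ℝ) (y : ℝ)
    (hf₁nonneg : ∀ t, 0 ≤ f₁ t) (hf₁prob : ∫ t, f₁ t = 1)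
    (hf₂c : Continuous f₂) (hf₂pos : ∀ t, 0 < f₂ t) (hf₂bdd : ∃ M, ∀ t, f₂ t ≤ M)
    (hf₂prob : ∫ t, f₂ t = 1) (hf₂mean : ∫ t, t * f₂ t = 0)
    (hDUR : ∃ d > (0 : ℝ), ∃ k : ℝ, ∀ θ : ℝ, k < |θ| →
      |∫ x, x * post f₁ f₂ y θ x| ≤ |θ| - d)
    (hGTIP : ∃ a > (0 : ℝ), ∃ b > (0 : ℝ), ∀ θ : ℝ, ∀ t : ℝ, 0 ≤ t →
      (∫ x in {x : ℝ | t < |x - θ|}, post f₁ f₂ y θ x) ≤ a * Real.exp (-b * t))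
    (hMGF : ∃ s > (0 : ℝ), Integrable (fun t => Real.exp (s * |t|) * f₂ t)) :
    ∃ r : ℝ, 0 ≤ r ∧ r < 1 ∧ ∃ M : ℝ → ℝ, (∀ θ₀, 0 ≤ M θ₀) ∧
      ∀ θ₀ : ℝ, ∀ n : ℕ, 1 ≤ n →
        (∫ θ, |gibbsTransN f₁ f₂ y n θ₀ θ - cnorm f₁ f₂ y θ / (∫ θ', cnorm f₁ f₂ y θ')|) ≤
          M θ₀ * r ^ n := by
  obtain ⟨d, hd, k, hmean⟩ := hDUR
  obtain ⟨a, ha, b, hb, htail⟩ := hGTIP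
  obtain ⟨s, hs, hexp⟩ := hMGF
  have h : IsGibbsModel f₁ f₂ :=
    ⟨⟨hf₁nonneg, hf₁prob⟩, ⟨fun t => (hf₂pos t).le, hf₂prob⟩, hf₂c, hf₂pos, hf₂bdd⟩
  have hσ : 0 < min s (b / 2) := by positivity
  have hσb : min s (b / 2) < b := (min_le_right _ _).trans_lt (half_lt_self hb)
  have herg := h.isGeometricallyErgodic_gibbsTrans hσ hd
    (fun θ => h.expMomentLE_postLaw ha.le hσ hσb (htail θ))
    ((h.expMomentLE_right hexp).mono_exponent (min_le_left _ _)) hf₂mean hmean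
  simpa only [(h.isProbDensity_cnorm y).integral_eq_one, div_one] using
    herg.integral_abs_gibbsTransN_sub_le

/-- if the model is DUR, the non-centred parametrisation is GTIP, and `f₂`
has a finite moment generating function near 0, then the marginal Θ-chain of the centred
Gibbs sampler is geometrically ergodic. -/
theorem dur_gtip_mgf_implies_geometrically_ergodic (f₁ f₂ : ℝ → ℝ) (y : ℝ)
    (hf₁c : Continuous f₁) (hf₂c : Continuous f₂)
    (hf₁pos : ∀ t, 0 < f₁ t) (hf₂pos : ∀ t, 0 < f₂ t)
    (hf₁bdd : ∃ M, ∀ t, f₁ t ≤ M) (hf₂bdd : ∃ M, ∀ t, f₂ t ≤ M)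
    (hf₁sym : ∀ t, f₁ (-t) = f₁ t) (hf₂sym : ∀ t, f₂ (-t) = f₂ t)
    (hf₁prob : ∫ t, f₁ t = 1) (hf₂prob : ∫ t, f₂ t = 1)
    (hjint : ∀ θ, Integrable (fun x => fjoint f₁ f₂ y θ x))
    (hcpos : ∀ θ, 0 < cnorm f₁ f₂ y θ)
    (hCint : Integrable (fun θ => cnorm f₁ f₂ y θ))
    (hDUR : ∃ d > (0 : ℝ), ∃ k > (0 : ℝ), ∀ θ : ℝ, k < |θ| →
      |∫ x, x * post f₁ f₂ y θ x| ≤ |θ| - d)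
    (hGTIP : ∃ a > (0 : ℝ), ∃ b > (0 : ℝ), ∀ θ : ℝ, ∀ t : ℝ, 0 ≤ t →
      (∫ x in {x : ℝ | t < |x - θ|}, post f₁ f₂ y θ x) ≤ a * Real.exp (-b * t))
    (hMGF : ∃ s > (0 : ℝ), Integrable (fun t => Real.exp (s * |t|) * f₂ t)) :
    ∃ r : ℝ, 0 ≤ r ∧ r < 1 ∧ ∃ M : ℝ → ℝ, (∀ θ₀, 0 ≤ M θ₀) ∧
      ∀ θ₀ : ℝ, ∀ n : ℕ, 1 ≤ n →
        (∫ θ, |gibbsTransN f₁ f₂ y n θ₀ θ - cnorm f₁ f₂ y θ / (∫ θ', cnorm f₁ f₂ y θ')|) ≤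
          M θ₀ * r ^ n := by
  obtain ⟨d, hd, k, -, hmean⟩ := hDUR
  exact dur_gtip_mgf_implies_geometrically_ergodic_general f₁ f₂ y (fun t => (hf₁pos t).le) hf₁prob
    hf₂c hf₂pos hf₂bdd hf₂prob (integral_mul_eq_zero_of_even hf₂sym) ⟨d, hd, k, hmean⟩ hGTIP hMGF
end
end

section
/- Suppose: (i) there exist d, k > 0 such that for all |θ| > k, |∫_ℝ x·π(x | θ) dx| ≤ |θ| − d (DUR); (ii) there exist a, b > 0 such that for every θ ∈ ℝ and every t ≥ 0, ∫_{{x : |x − θ| > t}} π(x | θ) dx ≤ a·e^{−b·t} (GTIP of the non-centred parametrisation); (iii) ∫_ℝ e^{s|t|} f₂(t) dt < ∞ for some s > 0. Then a geometric drift condition holds for the marginal Θ-chain with drift function V(θ) = e^{α|θ|}: there exist α > 0, δ > 0 and K < ∞ such that for every θ₀ with |θ₀| > k, ∫_ℝ e^{α|θ₁|} p(θ₀, θ₁) dθ₁ ≤ (1 − α·δ)·e^{α|θ₀|} + K. -/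
open MeasureTheory Filter Set

noncomputable section

/-!
Given `Θ = θ`, the next state of the chain is `X - Z`, with `X` drawn from `π(· | θ)` and `Z` an
independent copy of the centred noise `Z₂`, so its law is a convolution of probability measures.
By the layer cake formula the exponential tails of `X - θ` bound `E exp (η |X - θ|)` uniformly in
`θ`, hence also `E exp (η |W - θ|) ≤ M` for `W = X - Z`. For `θ ≥ 0` a second-order expansion of
the exponential gives `E exp (α (W - θ)) ≤ 1 + α E (W - θ) + (α / η)² M`, where `E (W - θ) ≤ -d`;
for small `α` the linear term wins. The event `W < 0`, where `|W|` differs from `W`, contributes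
at most `M`, and `θ < 0` is the mirror image.
-/

open Real

section ExpInequalities

open scoped Nat

lemma hasSum_exp_sub_one_sub (z : ℝ) :
    HasSum (fun n : ℕ => z ^ (n + 2) / (n + 2)!) (exp z - 1 - z) := by
  have hexp : HasSum (fun n : ℕ => z ^ n / n !) (exp z) := by
    rw [exp_eq_exp_ℝ]
    exact NormedSpace.expSeries_div_hasSum_exp z
  have hshift := (hasSum_nat_add_iff' 2).mpr hexp
  simpa [Finset.sum_range_succ, ← sub_sub] using hshift

lemma exp_mul_le_one_add_add_sq_mul_exp_abs {r : ℝ} (hr₀ : 0 ≤ r) (hr₁ : r ≤ 1) (z : ℝ) :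
    exp (r * z) ≤ 1 + r * z + r ^ 2 * exp |z| := by
  have hterm (n : ℕ) :
      (r * z) ^ (n + 2) / (n + 2)! ≤ r ^ 2 * (|z| ^ (n + 2) / (n + 2)!) := by
    have hrpow : r ^ (n + 2) ≤ r ^ 2 := pow_le_pow_of_le_one hr₀ hr₁ (by lia)
    have hzpow : z ^ (n + 2) ≤ |z| ^ (n + 2) := (le_abs_self _).trans (abs_pow z _).le
    calc (r * z) ^ (n + 2) / (n + 2)! = r ^ (n + 2) * (z ^ (n + 2) / (n + 2)!) := by
          rw [mul_pow, mul_div_assoc]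
      _ ≤ r ^ (n + 2) * (|z| ^ (n + 2) / (n + 2)!) := by gcongr
      _ ≤ r ^ 2 * (|z| ^ (n + 2) / (n + 2)!) := by gcongr
  have hremainder : exp (r * z) - 1 - r * z ≤ r ^ 2 * (exp |z| - 1 - |z|) :=
    hasSum_le hterm (hasSum_exp_sub_one_sub _) ((hasSum_exp_sub_one_sub _).mul_left _)
  have hdrop : r ^ 2 * (exp |z| - 1 - |z|) ≤ r ^ 2 * exp |z| := by
    gcongr
    linarith [abs_nonneg z]
  linarith

lemma exp_mul_abs_le_quadratic {α η θ : ℝ} (hα : 0 ≤ α) (hη : 0 < η) (hαη : α ≤ η)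
    (hθ : 0 ≤ θ) (w : ℝ) :
    exp (α * |w|) ≤
      exp (α * θ) * (1 + α * (w - θ) + (α / η) ^ 2 * exp (η * |w - θ|)) + exp (η * |w - θ|) := by
  have hexpand : exp (α * (w - θ)) ≤ 1 + α * (w - θ) + (α / η) ^ 2 * exp (η * |w - θ|) := by
    have h := exp_mul_le_one_add_add_sq_mul_exp_abs (div_nonneg hα hη.le)
      (div_le_one_of_le₀ hαη hη.le) (η * (w - θ))
    rwa [← mul_assoc, div_mul_cancel₀ α hη.ne', abs_mul, abs_of_pos hη] at h
  have hnegative : -(α * w) ≤ η * |w - θ| :=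
    calc -(α * w) ≤ α * |w - θ| := by
          rw [← mul_neg]
          gcongr
          linarith [neg_abs_le (w - θ)]
      _ ≤ η * |w - θ| := by gcongr
  calc exp (α * |w|) = exp |α * w| := by rw [abs_mul, abs_of_nonneg hα]
    _ ≤ exp (α * w) + exp (-(α * w)) := exp_abs_le _
    _ = exp (α * θ) * exp (α * (w - θ)) + exp (-(α * w)) := by rw [← exp_add]; ring_nf
    _ ≤ _ := by gcongr

end ExpInequalities

section ExponentialMoments

variable {Ω : Type*} [MeasurableSpace Ω] {P : Measure Ω} {W : Ω → ℝ}

lemma integrable_of_integrable_exp_mul_abs_sub [IsFiniteMeasure P] {η θ : ℝ} (hη : 0 < η)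
    (hW : AEStronglyMeasurable W P) (hexp : Integrable (fun ω => exp (η * |W ω - θ|)) P) :
    Integrable W P := by
  suffices hsub : Integrable (fun ω => W ω - θ) P by
    exact (hsub.add (integrable_const θ)).congr (ae_of_all _ fun ω => sub_add_cancel _ _)
  refine (hexp.const_mul η⁻¹).mono' (by fun_prop) (ae_of_all _ fun ω => ?_)
  rw [norm_eq_abs, le_inv_mul_iff₀ hη]
  linarith [add_one_le_exp (η * |W ω - θ|)]

lemma integral_exp_mul_abs_le_of_nonneg [IsProbabilityMeasure P] {α η θ d : ℝ}
    (hα : 0 ≤ α) (hη : 0 < η) (hαη : α ≤ η) (hθ : 0 ≤ θ) (hW : AEStronglyMeasurable W P)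
    (hexp : Integrable (fun ω => exp (η * |W ω - θ|)) P) (hmean : ∫ ω, W ω ∂P ≤ θ - d) :
    ∫ ω, exp (α * |W ω|) ∂P ≤
      (1 - α * d + (α / η) ^ 2 * ∫ ω, exp (η * |W ω - θ|) ∂P) * exp (α * θ) +
        ∫ ω, exp (η * |W ω - θ|) ∂P := by
  set M := ∫ ω, exp (η * |W ω - θ|) ∂P
  have hWint : Integrable W P := integrable_of_integrable_exp_mul_abs_sub hη hW hexp
  have hlin : Integrable (fun ω => 1 + α * (W ω - θ)) P := by fun_prop
  have hquad : Integrable (fun ω => (α / η) ^ 2 * exp (η * |W ω - θ|)) P := hexp.const_mul _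
  have hsum : Integrable (fun ω => exp (α * θ) *
      (1 + α * (W ω - θ) + (α / η) ^ 2 * exp (η * |W ω - θ|))) P :=
    (hlin.add hquad).const_mul _
  have hdrift : α * (∫ ω, W ω ∂P - θ) ≤ -(α * d) := by
    rw [← mul_neg]
    gcongr
    linarith
  calc ∫ ω, exp (α * |W ω|) ∂P
      ≤ ∫ ω, (exp (α * θ) * (1 + α * (W ω - θ) + (α / η) ^ 2 * exp (η * |W ω - θ|)) +
          exp (η * |W ω - θ|)) ∂P :=
        integral_mono_of_nonneg (ae_of_all _ fun ω => (exp_pos _).le)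
          (hsum.add hexp)
          (ae_of_all _ fun ω => exp_mul_abs_le_quadratic hα hη hαη hθ (W ω))
    _ = exp (α * θ) * (1 + α * (∫ ω, W ω ∂P - θ) + (α / η) ^ 2 * M) + M := by
        rw [integral_add hsum hexp, integral_const_mul,
          integral_add hlin hquad, integral_const_mul,
          integral_add (integrable_const _) (by fun_prop), integral_const_mul,
          integral_sub hWint (integrable_const _)]
        simp [M]
    _ ≤ exp (α * θ) * (1 - α * d + (α / η) ^ 2 * M) + M := by
        gcongr
        linarith
    _ = _ := by ring

lemma integral_exp_mul_abs_le_of_abs_integral_le [IsProbabilityMeasure P] {α η θ d : ℝ}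
    (hα : 0 ≤ α) (hη : 0 < η) (hαη : α ≤ η) (hW : AEStronglyMeasurable W P)
    (hexp : Integrable (fun ω => exp (η * |W ω - θ|)) P) (hmean : |∫ ω, W ω ∂P| ≤ |θ| - d) :
    ∫ ω, exp (α * |W ω|) ∂P ≤
      (1 - α * d + (α / η) ^ 2 * ∫ ω, exp (η * |W ω - θ|) ∂P) * exp (α * |θ|) +
        ∫ ω, exp (η * |W ω - θ|) ∂P := by
  rcases le_total 0 θ with hθ | hθ
  · rw [abs_of_nonneg hθ] at hmean ⊢
    exact integral_exp_mul_abs_le_of_nonneg hα hη hαη hθ hW hexp ((le_abs_self _).trans hmean)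
  · have habs (ω : Ω) : |-W ω - -θ| = |W ω - θ| := by rw [neg_sub_neg, abs_sub_comm]
    have hreflected := integral_exp_mul_abs_le_of_nonneg (W := fun ω => -W ω) (θ := -θ) (d := d)
      hα hη hαη (neg_nonneg.mpr hθ) hW.neg (by simpa only [habs] using hexp)
      (by rw [integral_neg, ← abs_of_nonpos hθ]; exact (neg_le_abs _).trans hmean)
    simpa only [habs, abs_neg, abs_of_nonpos hθ] using hreflected

lemma exists_pos_le_and_sq_mul_le {η M d : ℝ} (hη : 0 < η) (hM : 0 < M) (hd : 0 < d) :
    ∃ α > 0, α ≤ η ∧ (α / η) ^ 2 * M ≤ α * (d / 2) := by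
  refine ⟨min η (η ^ 2 * (d / 2) / M), by positivity, min_le_left _ _, ?_⟩
  set α := min η (η ^ 2 * (d / 2) / M)
  have hα : 0 < α := by positivity
  have hαM : α * M ≤ η ^ 2 * (d / 2) := (le_div_iff₀ hM).mp (min_le_right _ _)
  calc (α / η) ^ 2 * M = α * (α * M) / η ^ 2 := by ring
    _ ≤ α * (η ^ 2 * (d / 2)) / η ^ 2 := by gcongr
    _ = α * (d / 2) := by field_simp

lemma exists_uniform_geometric_drift {η M d : ℝ} (hη : 0 < η) (hM : 0 < M) (hd : 0 < d) :
    ∃ α > 0, ∃ δ > 0, ∃ K : ℝ, ∀ (κ : Measure ℝ) [IsProbabilityMeasure κ] (θ : ℝ),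
      Integrable (fun x => exp (η * |x - θ|)) κ → ∫ x, exp (η * |x - θ|) ∂κ ≤ M →
      |∫ x, x ∂κ| ≤ |θ| - d →
      ∫ x, exp (α * |x|) ∂κ ≤ (1 - α * δ) * exp (α * |θ|) + K := by
  obtain ⟨α, hα, hαη, hαM⟩ := exists_pos_le_and_sq_mul_le hη hM hd
  refine ⟨α, hα, d / 2, half_pos hd, M, fun κ _ θ hexp hle hmean => ?_⟩
  refine (integral_exp_mul_abs_le_of_abs_integral_le (W := fun x => x) hα.le hη hαη (by fun_prop)
    hexp hmean).trans ?_
  have hcoeff : (α / η) ^ 2 * ∫ x, exp (η * |x - θ|) ∂κ ≤ α * (d / 2) :=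
    (mul_le_mul_of_nonneg_left hle (sq_nonneg _)).trans hαM
  gcongr
  linarith

end ExponentialMoments

section ExponentialTails

variable {Ω : Type*} [MeasurableSpace Ω] {P : Measure Ω} {X : Ω → ℝ} {a b η : ℝ}

lemma intervalIntegral_mul_exp_mul (η r : ℝ) :
    ∫ t in (0 : ℝ)..r, η * exp (η * t) = exp (η * r) - 1 := by
  rw [intervalIntegral.integral_const_mul, ← smul_eq_mul,
    intervalIntegral.smul_integral_comp_mul_left, integral_exp, mul_zero, exp_zero]

lemma lintegral_exp_mul_sub_one_le_of_tail [IsFiniteMeasure P] (hX : AEMeasurable X P)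
    (hX₀ : 0 ≤ᵐ[P] X) (ha : 0 ≤ a) (hη : 0 ≤ η) (hηb : η < b)
    (htail : ∀ t, 0 ≤ t → P.real {ω | t < X ω} ≤ a * exp (-b * t)) :
    ∫⁻ ω, ENNReal.ofReal (exp (η * X ω) - 1) ∂P ≤ ENNReal.ofReal (a * η / (b - η)) := by
  have hlayer := lintegral_comp_eq_lintegral_meas_lt_mul (g := fun t => η * exp (η * t)) P hX₀ hX
    (fun t _ => (by fun_prop : Continuous _).intervalIntegrable _ _)
    (ae_of_all _ fun t => by positivity)
  simp only [intervalIntegral_mul_exp_mul] at hlayer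
  have hdecay : -(b - η) < 0 := by linarith
  have hpoint (t : ℝ) (ht : t ∈ Ioi 0) : P {ω | t < X ω} * ENNReal.ofReal (η * exp (η * t)) ≤
      ENNReal.ofReal (a * η * exp (-(b - η) * t)) := by
    rw [← ofReal_measureReal, ← ENNReal.ofReal_mul measureReal_nonneg]
    refine ENNReal.ofReal_le_ofReal ?_
    calc P.real {ω | t < X ω} * (η * exp (η * t))
        ≤ a * exp (-b * t) * (η * exp (η * t)) := by gcongr; exact htail t (le_of_lt ht)
      _ = a * η * (exp (-b * t) * exp (η * t)) := by ring
      _ = a * η * exp (-(b - η) * t) := by rw [← exp_add]; ring_nf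
  calc ∫⁻ ω, ENNReal.ofReal (exp (η * X ω) - 1) ∂P
      = ∫⁻ t in Ioi 0, P {ω | t < X ω} * ENNReal.ofReal (η * exp (η * t)) := hlayer
    _ ≤ ∫⁻ t in Ioi 0, ENNReal.ofReal (a * η * exp (-(b - η) * t)) :=
        setLIntegral_mono' measurableSet_Ioi hpoint
    _ = ENNReal.ofReal (∫ t in Ioi 0, a * η * exp (-(b - η) * t)) :=
        (ofReal_integral_eq_lintegral_ofReal ((integrableOn_exp_mul_Ioi hdecay 0).const_mul _)
          (ae_of_all _ fun t => by positivity)).symm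
    _ = ENNReal.ofReal (a * η / (b - η)) := by
        rw [integral_const_mul, integral_exp_mul_Ioi hdecay, mul_zero, exp_zero, neg_div_neg_eq,
          mul_one_div]

lemma integrable_exp_mul_and_integral_le_of_tail [IsProbabilityMeasure P] (hX : AEMeasurable X P)
    (hX₀ : 0 ≤ᵐ[P] X) (hη : 0 ≤ η) (hηb : η < b)
    (htail : ∀ t, 0 ≤ t → P.real {ω | t < X ω} ≤ a * exp (-b * t)) :
    Integrable (fun ω => exp (η * X ω)) P ∧
      ∫ ω, exp (η * X ω) ∂P ≤ 1 + a * η / (b - η) := by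
  have ha : 0 ≤ a := by simpa using measureReal_nonneg.trans (htail 0 le_rfl)
  have hnonneg : 0 ≤ᵐ[P] fun ω => exp (η * X ω) - 1 := by
    filter_upwards [hX₀] with ω hω
    exact sub_nonneg.mpr (one_le_exp (mul_nonneg hη hω))
  have hmeas : AEStronglyMeasurable (fun ω => exp (η * X ω) - 1) P := by fun_prop
  have hle := lintegral_exp_mul_sub_one_le_of_tail hX hX₀ ha hη hηb htail
  have hint : Integrable (fun ω => exp (η * X ω) - 1) P :=
    ⟨hmeas, (hasFiniteIntegral_iff_ofReal hnonneg).mpr (hle.trans_lt ENNReal.ofReal_lt_top)⟩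
  have hexp : Integrable (fun ω => exp (η * X ω)) P :=
    (hint.add (integrable_const 1)).congr (ae_of_all _ fun ω => sub_add_cancel _ _)
  refine ⟨hexp, ?_⟩
  have hbound : ∫ ω, (exp (η * X ω) - 1) ∂P ≤ a * η / (b - η) := by
    rw [integral_eq_lintegral_of_nonneg_ae hnonneg hmeas]
    exact ENNReal.toReal_le_of_le_ofReal
      (div_nonneg (mul_nonneg ha hη) (sub_pos.mpr hηb).le) hle
  rw [integral_sub hexp (integrable_const 1), integral_const, probReal_univ, one_smul] at hbound
  linarith

end ExponentialTails

section Convolution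

variable {μ ν : Measure ℝ}

lemma integral_id_conv [IsProbabilityMeasure μ] [IsProbabilityMeasure ν]
    (hμ : Integrable (fun x => x) μ) (hν : Integrable (fun x => x) ν) :
    ∫ x, x ∂(μ ∗ ν) = ∫ x, x ∂μ + ∫ x, x ∂ν := by
  rw [Measure.conv, integral_map (by fun_prop) (by fun_prop),
    integral_add (hμ.comp_fst ν) (hν.comp_snd μ), integral_fun_fst (fun x => x),
    integral_fun_snd (fun x => x)]
  simp

lemma integrable_exp_conv_and_integral_le [SFinite μ] [SFinite ν] {η θ : ℝ} (hη : 0 ≤ η)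
    (hμ : Integrable (fun x => exp (η * |x - θ|)) μ) (hν : Integrable (fun x => exp (η * |x|)) ν) :
    Integrable (fun x => exp (η * |x - θ|)) (μ ∗ ν) ∧
      ∫ x, exp (η * |x - θ|) ∂(μ ∗ ν) ≤
        (∫ x, exp (η * |x - θ|) ∂μ) * ∫ x, exp (η * |x|) ∂ν := by
  have hsubmul (z : ℝ × ℝ) :
      exp (η * |z.1 + z.2 - θ|) ≤ exp (η * |z.1 - θ|) * exp (η * |z.2|) := by
    rw [← exp_add, ← mul_add, add_sub_right_comm]
    gcongr
    exact abs_add_le _ _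
  have hprod := hμ.mul_prod hν
  have hint : Integrable (fun z : ℝ × ℝ => exp (η * |z.1 + z.2 - θ|)) (μ.prod ν) :=
    hprod.mono' (by fun_prop) (ae_of_all _ fun z => by simpa using hsubmul z)
  rw [Measure.conv, integrable_map_measure (by fun_prop) (by fun_prop),
    integral_map (by fun_prop) (by fun_prop), ← integral_prod_mul]
  exact ⟨hint, integral_mono hint hprod hsubmul⟩

end Convolution

/-- The measure on `E` with density `g` with respect to `volume`; a negative value of `g` counts
as `0`. It turns the real-valued densities of the model into the laws they describe. -/
def densityMeasure {E : Type*} [MeasureSpace E] (g : E → ℝ) : Measure E :=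
  volume.withDensity fun x => ENNReal.ofReal (g x)

section DensityMeasure

variable {E : Type*} [MeasureSpace E] {g : E → ℝ}

lemma integral_densityMeasure (hgm : Measurable g) (hg : ∀ x, 0 ≤ g x) (φ : E → ℝ) :
    ∫ x, φ x ∂(densityMeasure g) = ∫ x, φ x * g x := by
  rw [densityMeasure, integral_withDensity_eq_integral_toReal_smul (by fun_prop) (by simp)]
  simp only [ENNReal.toReal_ofReal (hg _), smul_eq_mul, mul_comm]

lemma integrable_densityMeasure_iff (hgm : Measurable g) (hg : ∀ x, 0 ≤ g x) {φ : E → ℝ} :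
    Integrable φ (densityMeasure g) ↔ Integrable fun x => φ x * g x := by
  rw [densityMeasure, integrable_withDensity_iff (by fun_prop) (by simp)]
  simp only [ENNReal.toReal_ofReal (hg _)]

lemma densityMeasure_real_apply (hgm : Measurable g) (hg : ∀ x, 0 ≤ g x) {s : Set E}
    (hs : MeasurableSet s) : (densityMeasure g).real s = ∫ x in s, g x := by
  rw [densityMeasure, measureReal_def, withDensity_apply _ hs,
    integral_eq_lintegral_of_nonneg_ae (ae_of_all _ hg) (by fun_prop)]

lemma isProbabilityMeasure_densityMeasure (hg : ∀ x, 0 ≤ g x) (hone : ∫ x, g x = 1) :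
    IsProbabilityMeasure (densityMeasure g) := by
  have hint : Integrable g := .of_integral_ne_zero (by simp [hone])
  constructor
  rw [densityMeasure, withDensity_apply _ .univ, setLIntegral_univ,
    ← ofReal_integral_eq_lintegral_ofReal hint (ae_of_all _ hg), hone, ENNReal.ofReal_one]

lemma integral_conv_densityMeasure {G : Type*} [AddGroup G] [MeasureSpace G] [MeasurableAdd₂ G]
    [MeasurableNeg G] [SFinite (volume : Measure G)] [(volume : Measure G).IsAddLeftInvariant]
    {f g : G → ℝ} (hfm : Measurable f) (hgm : Measurable g) (hf : ∀ x, 0 ≤ f x)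
    (hg : ∀ x, 0 ≤ g x) [IsFiniteMeasure (densityMeasure f)] [IsFiniteMeasure (densityMeasure g)]
    (φ : G → ℝ) :
    ∫ t, φ t ∂(densityMeasure f ∗ densityMeasure g) =
      ∫ t, φ t * ∫ x, f x * g (-x + t) := by
  set h : G → ENNReal := (fun x => ENNReal.ofReal (f x)) ⋆ₗ fun x => ENNReal.ofReal (g x)
  have hconv : densityMeasure f ∗ densityMeasure g = volume.withDensity h :=
    conv_withDensity_eq_lconvolution (by fun_prop) (by fun_prop)
  have hmeas : Measurable h := by fun_prop
  have hfinite : ∀ᵐ t, h t < ⊤ := by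
    refine ae_lt_top hmeas ?_
    rw [← setLIntegral_univ, ← withDensity_apply h .univ, ← hconv]
    exact measure_ne_top _ _
  have htoReal (t : G) : (h t).toReal = ∫ x, f x * g (-x + t) := by
    rw [integral_eq_lintegral_of_nonneg_ae (ae_of_all _ fun x => mul_nonneg (hf _) (hg _))
      (by fun_prop)]
    simp only [h, lconvolution_def, ENNReal.ofReal_mul (hf _)]
  rw [hconv, integral_withDensity_eq_integral_toReal_smul hmeas hfinite]
  simp only [htoReal, smul_eq_mul, mul_comm]

end DensityMeasure

section ReflectedDensity

variable {g : ℝ → ℝ}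

lemma integral_mul_eq_zero_of_even_s5 (hg : ∀ x, g (-x) = g x) : ∫ x, x * g x = 0 := by
  have hodd := integral_neg_eq_self (fun x => x * g x) volume
  simp only [hg, neg_mul, integral_neg] at hodd
  linarith

lemma integral_id_densityMeasure_comp_neg (hgm : Measurable g) (hg : ∀ x, 0 ≤ g x) :
    ∫ x, x ∂(densityMeasure fun x => g (-x)) = -∫ x, x * g x := by
  rw [integral_densityMeasure (by fun_prop) fun x => hg (-x),
    ← integral_neg_eq_self (fun x => x * g x)]
  simp only [neg_mul, integral_neg, neg_neg]

lemma integrable_exp_densityMeasure_comp_neg (hgm : Measurable g) (hg : ∀ x, 0 ≤ g x) {η s : ℝ}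
    (hηs : η ≤ s) (hint : Integrable fun x => exp (s * |x|) * g x) :
    Integrable (fun x => exp (η * |x|)) (densityMeasure fun x => g (-x)) := by
  have hreflected : Integrable (fun x => exp (s * |x|)) (densityMeasure fun x => g (-x)) := by
    rw [integrable_densityMeasure_iff (by fun_prop) fun x => hg (-x)]
    simpa only [abs_neg] using hint.comp_neg
  refine hreflected.mono' (by fun_prop) (ae_of_all _ fun x => ?_)
  rw [norm_eq_abs, abs_exp]
  gcongr

end ReflectedDensity

section Gibbs

variable {f₁ f₂ : ℝ → ℝ} {y θ : ℝ}

lemma measurable_post (hf₁m : Measurable f₁) (hf₂m : Measurable f₂) :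
    Measurable (post f₁ f₂ y θ) := by
  unfold post fjoint
  fun_prop

lemma post_nonneg (hf₁ : ∀ t, 0 ≤ f₁ t) (hf₂ : ∀ t, 0 ≤ f₂ t) (x : ℝ) :
    0 ≤ post f₁ f₂ y θ x :=
  have hjoint (x : ℝ) : 0 ≤ fjoint f₁ f₂ y θ x := mul_nonneg (hf₁ _) (hf₂ _)
  div_nonneg (hjoint x) (integral_nonneg hjoint)

lemma integral_post (hc : cnorm f₁ f₂ y θ ≠ 0) : ∫ x, post f₁ f₂ y θ x = 1 := by
  simp only [post, integral_div]
  exact div_self hc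

lemma gibbsTrans_eq_integral_post_mul (f₁ f₂ : ℝ → ℝ) (y θ t : ℝ) :
    gibbsTrans f₁ f₂ y θ t = ∫ x, post f₁ f₂ y θ x * f₂ (-(-x + t)) := by
  rw [gibbsTrans, ← integral_const_mul]
  congr 1 with x
  rw [post, neg_add, neg_neg, ← sub_eq_add_neg]
  ring

lemma integral_mul_gibbsTrans (hf₁m : Measurable f₁) (hf₂m : Measurable f₂)
    (hf₁ : ∀ t, 0 ≤ f₁ t) (hf₂ : ∀ t, 0 ≤ f₂ t)
    [IsFiniteMeasure (densityMeasure (post f₁ f₂ y θ))]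
    [IsFiniteMeasure (densityMeasure fun u => f₂ (-u))] (φ : ℝ → ℝ) :
    ∫ t, φ t * gibbsTrans f₁ f₂ y θ t =
      ∫ t, φ t ∂(densityMeasure (post f₁ f₂ y θ) ∗ densityMeasure fun u => f₂ (-u)) := by
  rw [integral_conv_densityMeasure (measurable_post hf₁m hf₂m) (by fun_prop)
    (post_nonneg hf₁ hf₂) (fun u => hf₂ (-u))]
  simp only [gibbsTrans_eq_integral_post_mul]

lemma integrable_exp_densityMeasure_post_and_integral_le (hf₁m : Measurable f₁)
    (hf₂m : Measurable f₂) (hf₁ : ∀ t, 0 ≤ f₁ t) (hf₂ : ∀ t, 0 ≤ f₂ t)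
    [IsProbabilityMeasure (densityMeasure (post f₁ f₂ y θ))] {a b η : ℝ} (hη : 0 ≤ η) (hηb : η < b)
    (htail : ∀ t, 0 ≤ t → ∫ x in {x : ℝ | t < |x - θ|}, post f₁ f₂ y θ x ≤ a * exp (-b * t)) :
    Integrable (fun x => exp (η * |x - θ|)) (densityMeasure (post f₁ f₂ y θ)) ∧
      ∫ x, exp (η * |x - θ|) ∂(densityMeasure (post f₁ f₂ y θ)) ≤ 1 + a * η / (b - η) := by
  refine integrable_exp_mul_and_integral_le_of_tail (by fun_prop)
    (ae_of_all _ fun x => abs_nonneg _) hη hηb fun t ht => ?_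
  rw [densityMeasure_real_apply (measurable_post hf₁m hf₂m) (post_nonneg hf₁ hf₂)
    (measurableSet_lt measurable_const (by fun_prop))]
  exact htail t ht

end Gibbs

theorem dur_gtip_mgf_implies_geometric_drift_general (f₁ f₂ : ℝ → ℝ) (y : ℝ)
    (hf₁m : Measurable f₁) (hf₂m : Measurable f₂)
    (hf₁ : ∀ t, 0 ≤ f₁ t) (hf₂ : ∀ t, 0 ≤ f₂ t)
    (hf₂prob : ∫ t, f₂ t = 1) (hf₂mean : ∫ t, t * f₂ t = 0) (d k : ℝ) (hd : 0 < d)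
    (hcpos : ∀ θ : ℝ, k < |θ| → 0 < cnorm f₁ f₂ y θ)
    (hDUR : ∀ θ : ℝ, k < |θ| → |∫ x, x * post f₁ f₂ y θ x| ≤ |θ| - d)
    (hGTIP : ∃ a > (0 : ℝ), ∃ b > (0 : ℝ), ∀ θ : ℝ, k < |θ| → ∀ t : ℝ, 0 ≤ t →
      (∫ x in {x : ℝ | t < |x - θ|}, post f₁ f₂ y θ x) ≤ a * exp (-b * t))
    (hMGF : ∃ s > (0 : ℝ), Integrable (fun t => exp (s * |t|) * f₂ t)) :
    ∃ α > (0 : ℝ), ∃ δ > (0 : ℝ), ∃ K : ℝ,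
      ∀ θ₀ : ℝ, k < |θ₀| →
        (∫ θ₁, exp (α * |θ₁|) * gibbsTrans f₁ f₂ y θ₀ θ₁) ≤
          (1 - α * δ) * exp (α * |θ₀|) + K := by
  obtain ⟨a, ha, b, hb, htail⟩ := hGTIP
  obtain ⟨s, hs, hmgf⟩ := hMGF
  obtain ⟨η, hη, hηbs⟩ := exists_between (lt_min hb hs)
  obtain ⟨hηb, hηs⟩ := lt_min_iff.mp hηbs
  let μ (θ : ℝ) := densityMeasure (post f₁ f₂ y θ)
  let ν := densityMeasure fun u => f₂ (-u)
  have hνprob : IsProbabilityMeasure ν := isProbabilityMeasure_densityMeasure (fun u => hf₂ (-u))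
    ((integral_neg_eq_self f₂ volume).trans hf₂prob)
  have hνexp : Integrable (fun u => exp (η * |u|)) ν :=
    integrable_exp_densityMeasure_comp_neg hf₂m hf₂ hηs.le hmgf
  have hM : 0 < (1 + a * η / (b - η)) * ∫ u, exp (η * |u|) ∂ν :=
    mul_pos (by have := sub_pos.mpr hηb; positivity) (integral_exp_pos hνexp)
  obtain ⟨α, hα, δ, hδ, K, hdrift⟩ := exists_uniform_geometric_drift hη hM hd
  refine ⟨α, hα, δ, hδ, K, fun θ hθ => ?_⟩
  have hμprob : IsProbabilityMeasure (μ θ) :=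
    isProbabilityMeasure_densityMeasure (post_nonneg hf₁ hf₂) (integral_post (hcpos θ hθ).ne')
  obtain ⟨hμexp, hμle⟩ := integrable_exp_densityMeasure_post_and_integral_le hf₁m hf₂m hf₁ hf₂
    hη.le hηb (htail θ hθ)
  obtain ⟨hexp, hle⟩ := integrable_exp_conv_and_integral_le hη.le hμexp hνexp
  have hmean : ∫ x, x ∂(μ θ ∗ ν) = ∫ x, x * post f₁ f₂ y θ x := by
    rw [integral_id_conv (integrable_of_integrable_exp_mul_abs_sub hη (by fun_prop) hμexp)
        (integrable_of_integrable_exp_mul_abs_sub (θ := 0) hη (by fun_prop) (by simpa using hνexp)),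
      integral_id_densityMeasure_comp_neg hf₂m hf₂, hf₂mean, neg_zero, add_zero,
      integral_densityMeasure (measurable_post hf₁m hf₂m) (post_nonneg hf₁ hf₂)]
  rw [integral_mul_gibbsTrans hf₁m hf₂m hf₁ hf₂]
  exact hdrift _ θ hexp (hle.trans (by gcongr)) (hmean ▸ hDUR θ hθ)

/-- under DUR (with constants `d, k`), GTIP of the non-centred
parametrisation, and a finite MGF of `f₂` near 0, a geometric drift condition with drift
function `V(θ) = e^{α|θ|}` holds for the marginal Θ-chain. -/
theorem dur_gtip_mgf_implies_geometric_drift (f₁ f₂ : ℝ → ℝ) (y : ℝ)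
    (hf₁c : Continuous f₁) (hf₂c : Continuous f₂)
    (hf₁pos : ∀ t, 0 < f₁ t) (hf₂pos : ∀ t, 0 < f₂ t)
    (hf₁bdd : ∃ M, ∀ t, f₁ t ≤ M) (hf₂bdd : ∃ M, ∀ t, f₂ t ≤ M)
    (hf₁sym : ∀ t, f₁ (-t) = f₁ t) (hf₂sym : ∀ t, f₂ (-t) = f₂ t)
    (hf₁prob : ∫ t, f₁ t = 1) (hf₂prob : ∫ t, f₂ t = 1)
    (hjint : ∀ θ, Integrable (fun x => fjoint f₁ f₂ y θ x))
    (hcpos : ∀ θ, 0 < cnorm f₁ f₂ y θ)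
    (d k : ℝ) (hd : 0 < d) (hk : 0 < k)
    (hDUR : ∀ θ : ℝ, k < |θ| → |∫ x, x * post f₁ f₂ y θ x| ≤ |θ| - d)
    (hGTIP : ∃ a > (0 : ℝ), ∃ b > (0 : ℝ), ∀ θ : ℝ, ∀ t : ℝ, 0 ≤ t →
      (∫ x in {x : ℝ | t < |x - θ|}, post f₁ f₂ y θ x) ≤ a * Real.exp (-b * t))
    (hMGF : ∃ s > (0 : ℝ), Integrable (fun t => Real.exp (s * |t|) * f₂ t)) :
    ∃ α > (0 : ℝ), ∃ δ > (0 : ℝ), ∃ K : ℝ,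
      ∀ θ₀ : ℝ, k < |θ₀| →
        (∫ θ₁, Real.exp (α * |θ₁|) * gibbsTrans f₁ f₂ y θ₀ θ₁) ≤
          (1 - α * δ) * Real.exp (α * |θ₀|) + K := by
  obtain ⟨a, ha, b, hb, htail⟩ := hGTIP
  exact dur_gtip_mgf_implies_geometric_drift_general f₁ f₂ y hf₁c.measurable hf₂c.measurable
    (fun t => (hf₁pos t).le) (fun t => (hf₂pos t).le) hf₂prob (integral_mul_eq_zero_of_even_s5 hf₂sym)
    d k hd (fun θ _ => hcpos θ) hDUR ⟨a, ha, b, hb, fun θ _ => htail θ⟩ hMGF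
end
end

section
/- Let p : ℝ × ℝ → [0, ∞) be a measurable transition density (∫_ℝ p(x, u) du = 1 for every x), and let π be an everywhere positive probability density on ℝ with respect to which the chain is reversible: π(x)·p(x, u) = π(u)·p(u, x) for all x, u ∈ ℝ. Suppose there is a continuous, everywhere positive probability density q on ℝ, symmetric about 0, such that for every z ∈ ℝ, lim_{|x| → ∞} p(x, x + z) = q(z). Then π has heavy tails in the sense that lim_{x → ∞} (log ∫_x^∞ π(u) du)/x = 0 and lim_{x → ∞} (log ∫_{−∞}^{−x} π(u) du)/(−x) = 0. -/
open MeasureTheory Filter Set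

/-!
Detailed balance gives `π (x + h) / π x = p x (x + h) / p (x + h) x`. Hence, for a single `r > 0`,
`π (x + h) / π x → r` at `+∞` and `π (x - h) / π x → r⁻¹` at `-∞`. Convergence of the ratio passes
to the tail integrals `T x`, which decrease outwards, so `r ≤ 1` and `r⁻¹ ≤ 1`, that is `r = 1`.
Then `log T (x + h) - log T x → 0`, and averaging these increments gives `log T x / x → 0`.
-/

open Asymptotics Topology

section MonotoneGrowth

lemma tendsto_div_natCast_of_tendsto_sub {u : ℕ → ℝ} {L : ℝ}
    (hu : Tendsto (fun n => u (n + 1) - u n) atTop (𝓝 L)) :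
    Tendsto (fun n : ℕ => u n / n) atTop (𝓝 L) := by
  have hmean : Tendsto (fun n : ℕ => (n : ℝ)⁻¹ * (u n - u 0)) atTop (𝓝 L) := by
    simpa only [Finset.sum_range_sub] using hu.cesaro
  have hinit : Tendsto (fun n : ℕ => u 0 / n) atTop (𝓝 0) := tendsto_const_div_atTop_nhds_zero_nat _
  rw [← add_zero L]
  exact (hmean.add hinit).congr fun n => by ring

lemma tendsto_comp_natCast_mul_div {g : ℝ → ℝ} {h L : ℝ} (hh : 0 < h)
    (hinc : Tendsto (fun x => g (x + h) - g x) atTop (𝓝 L)) :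
    Tendsto (fun n : ℕ => g (n * h) / n) atTop (𝓝 L) := by
  refine tendsto_div_natCast_of_tendsto_sub ?_
  have hmul : Tendsto (fun n : ℕ => (n : ℝ) * h) atTop atTop :=
    tendsto_natCast_atTop_atTop.atTop_mul_const hh
  exact (hinc.comp hmul).congr fun n => by simp [add_one_mul]

lemma tendsto_comp_div_of_tendsto_div_natCast {u : ℕ → ℝ} {k : ℝ → ℕ} {L a : ℝ}
    (hu : Tendsto (fun n : ℕ => u n / n) atTop (𝓝 L)) (hk : Tendsto k atTop atTop)
    (hka : Tendsto (fun x => (k x : ℝ) / x) atTop (𝓝 a)) :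
    Tendsto (fun x => u (k x) / x) atTop (𝓝 (L * a)) := by
  refine ((hu.comp hk).mul hka).congr' ?_
  filter_upwards [hk.eventually_ne_atTop 0] with x hx
  exact div_mul_div_cancel₀ (Nat.cast_ne_zero.2 hx)

lemma tendsto_div_of_antitone_of_tendsto_sub {g : ℝ → ℝ} {h L : ℝ} (hg : Antitone g) (hh : 0 < h)
    (hinc : Tendsto (fun x => g (x + h) - g x) atTop (𝓝 L)) :
    Tendsto (fun x => g x / x) atTop (𝓝 (L / h)) := by
  have hgrid := tendsto_comp_natCast_mul_div hh hinc
  have hscale : Tendsto (fun x => h⁻¹ * x) atTop atTop := tendsto_id.const_mul_atTop (inv_pos.2 hh)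
  have hfloor : Tendsto (fun x => g (⌊h⁻¹ * x⌋₊ * h) / x) atTop (𝓝 (L * h⁻¹)) :=
    tendsto_comp_div_of_tendsto_div_natCast hgrid (tendsto_nat_floor_atTop.comp hscale)
      (tendsto_nat_floor_mul_div_atTop (inv_pos.2 hh).le)
  have hceil : Tendsto (fun x => g (⌈h⁻¹ * x⌉₊ * h) / x) atTop (𝓝 (L * h⁻¹)) :=
    tendsto_comp_div_of_tendsto_div_natCast hgrid (tendsto_nat_ceil_atTop.comp hscale)
      (tendsto_nat_ceil_mul_div_atTop (inv_pos.2 hh).le)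
  rw [div_eq_mul_inv]
  refine tendsto_of_tendsto_of_tendsto_of_le_of_le' hceil hfloor ?_ ?_ <;>
    filter_upwards [eventually_ge_atTop 0] with x hx <;>
    refine div_le_div_of_nonneg_right (hg ?_) hx
  · rw [← inv_mul_le_iff₀' hh]
    exact Nat.le_ceil _
  · rw [← le_inv_mul_iff₀' hh]
    exact Nat.floor_le (by positivity)

end MonotoneGrowth

lemma antitone_integral_Ici {α : Type*} [MeasurableSpace α] [Preorder α] {μ : Measure α}
    {f : α → ℝ} (hf : Integrable f μ) (hf_nonneg : ∀ x, 0 ≤ f x) :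
    Antitone fun x => ∫ u in Ici x, f u ∂μ := fun _ _ hxy =>
  setIntegral_mono_set hf.integrableOn (.of_forall hf_nonneg) (Ici_subset_Ici.2 hxy).eventuallyLE

section TailIntegralAsymptotics

variable {α : Type*} [MeasurableSpace α] [TopologicalSpace α] [LinearOrder α] [Nonempty α]
  [OrderClosedTopology α] [OpensMeasurableSpace α] {μ : Measure α}

lemma isLittleO_integral_Ici {E : Type*} [NormedAddCommGroup E] [NormedSpace ℝ E]
    {φ : α → E} {f : α → ℝ} (hf : Integrable f μ) (hf_nonneg : ∀ x, 0 ≤ f x)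
    (hφ : φ =o[atTop] f) :
    (fun x => ∫ u in Ici x, φ u ∂μ) =o[atTop] fun x => ∫ u in Ici x, f u ∂μ := by
  refine isLittleO_iff.2 fun c hc => ?_
  obtain ⟨a, ha⟩ := eventually_atTop.1 (isLittleO_iff.1 hφ hc)
  filter_upwards [eventually_ge_atTop a] with x hx
  calc ‖∫ u in Ici x, φ u ∂μ‖ ≤ ∫ u in Ici x, c * f u ∂μ := by
        refine norm_integral_le_of_norm_le (hf.const_mul c).integrableOn ?_
        refine ae_restrict_of_forall_mem measurableSet_Ici fun u hu => ?_
        simpa only [Real.norm_of_nonneg (hf_nonneg u)] using ha u (hx.trans hu)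
    _ = c * ‖∫ u in Ici x, f u ∂μ‖ := by
        rw [integral_const_mul, Real.norm_of_nonneg (integral_nonneg hf_nonneg)]

lemma tendsto_integral_Ici_div_integral_Ici {f g : α → ℝ} {r : ℝ} (hf : Integrable f μ)
    (hg : Integrable g μ) (hf_pos : ∀ x, 0 < f x) (hf_tail : ∀ x, ∫ u in Ici x, f u ∂μ ≠ 0)
    (hr : Tendsto (fun x => g x / f x) atTop (𝓝 r)) :
    Tendsto (fun x => (∫ u in Ici x, g u ∂μ) / ∫ u in Ici x, f u ∂μ) atTop (𝓝 r) := by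
  have herr : (fun x => g x - r * f x) =o[atTop] f := by
    refine (isLittleO_iff_tendsto fun x hx => absurd hx (hf_pos x).ne').2 ?_
    rw [← sub_self r]
    refine (hr.sub_const r).congr fun x => ?_
    rw [sub_div, mul_div_cancel_right₀ r (hf_pos x).ne']
  have htail := (isLittleO_integral_Ici hf (fun x => (hf_pos x).le) herr).tendsto_div_nhds_zero
  rw [← zero_add r]
  refine (htail.add_const r).congr fun x => ?_
  rw [integral_sub hg.integrableOn (hf.const_mul r).integrableOn, integral_const_mul, sub_div,
    mul_div_cancel_right₀ r (hf_tail x), sub_add_cancel]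

end TailIntegralAsymptotics

section TailIntegral

variable {f : ℝ → ℝ} {h r : ℝ}

lemma integral_Ici_pos (hf : Integrable f) (hf_pos : ∀ x, 0 < f x) (x : ℝ) :
    0 < ∫ u in Ici x, f u := by
  have hsupp : Function.support f = univ := eq_univ_of_forall fun u => (hf_pos u).ne'
  rw [setIntegral_pos_iff_support_of_nonneg_ae (.of_forall fun u => (hf_pos u).le) hf.integrableOn]
  simp [hsupp]

lemma integral_Ici_comp_add_right {E : Type*} [NormedAddCommGroup E] [NormedSpace ℝ E]
    (f : ℝ → E) (x h : ℝ) :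
    ∫ u in Ici x, f (u + h) = ∫ u in Ici (x + h), f u := by
  simpa using (measurePreserving_add_right volume h).setIntegral_preimage_emb
    (measurableEmbedding_addRight h) f (Ici (x + h))

lemma tendsto_integral_Ici_add_div (hf : Integrable f) (hf_pos : ∀ x, 0 < f x)
    (hr : Tendsto (fun x => f (x + h) / f x) atTop (𝓝 r)) :
    Tendsto (fun x => (∫ u in Ici (x + h), f u) / ∫ u in Ici x, f u) atTop (𝓝 r) := by
  simpa only [integral_Ici_comp_add_right] using tendsto_integral_Ici_div_integral_Ici hf
    (hf.comp_add_right h) hf_pos (fun x => (integral_Ici_pos hf hf_pos x).ne') hr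

lemma le_one_of_tendsto_add_div (hf : Integrable f) (hf_pos : ∀ x, 0 < f x) (hh : 0 ≤ h)
    (hr : Tendsto (fun x => f (x + h) / f x) atTop (𝓝 r)) : r ≤ 1 :=
  le_of_tendsto' (tendsto_integral_Ici_add_div hf hf_pos hr) fun x =>
    div_le_one_of_le₀ (antitone_integral_Ici hf (fun u => (hf_pos u).le) (by linarith))
      (integral_Ici_pos hf hf_pos x).le

lemma eq_one_of_tendsto_add_div_of_tendsto_neg_add_div (hf : Integrable f) (hf_pos : ∀ x, 0 < f x)
    (hh : 0 ≤ h) (hr_ne : r ≠ 0) (hright : Tendsto (fun x => f (x + h) / f x) atTop (𝓝 r))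
    (hleft : Tendsto (fun x => f (-(x + h)) / f (-x)) atTop (𝓝 r⁻¹)) : r = 1 := by
  have hr_pos : 0 < r :=
    (ge_of_tendsto' hright fun x => (div_pos (hf_pos _) (hf_pos _)).le).lt_of_ne' hr_ne
  have hle : r ≤ 1 := le_one_of_tendsto_add_div hf hf_pos hh hright
  have hinv_le : r⁻¹ ≤ 1 :=
    le_one_of_tendsto_add_div hf.comp_neg (fun x => hf_pos (-x)) hh hleft
  exact hle.antisymm ((inv_le_one₀ hr_pos).1 hinv_le)

lemma tendsto_log_integral_Ici_div (hf : Integrable f) (hf_pos : ∀ x, 0 < f x) (hh : 0 < h)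
    (hr_ne : r ≠ 0) (hr : Tendsto (fun x => f (x + h) / f x) atTop (𝓝 r)) :
    Tendsto (fun x => Real.log (∫ u in Ici x, f u) / x) atTop (𝓝 (Real.log r / h)) := by
  have htail_pos := integral_Ici_pos hf hf_pos
  refine tendsto_div_of_antitone_of_tendsto_sub (fun x y hxy => ?_) hh ?_
  · exact Real.log_le_log (htail_pos y) (antitone_integral_Ici hf (fun u => (hf_pos u).le) hxy)
  · refine ((tendsto_integral_Ici_add_div hf hf_pos hr).log hr_ne).congr fun x => ?_
    rw [Real.log_div (htail_pos _).ne' (htail_pos _).ne']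

end TailIntegral

lemma tendsto_div_of_detailed_balance {ι X : Type*} {F : Filter ι} {p : X → X → ℝ} {π : X → ℝ}
    {a b : ι → X} {c d : ℝ} (hπ : ∀ x, π x ≠ 0) (hrev : ∀ x u, π x * p x u = π u * p u x)
    (hd : d ≠ 0) (hab : Tendsto (fun i => p (a i) (b i)) F (𝓝 c))
    (hba : Tendsto (fun i => p (b i) (a i)) F (𝓝 d)) :
    Tendsto (fun i => π (b i) / π (a i)) F (𝓝 (c / d)) := by
  refine (hab.div hba hd).congr' ?_
  filter_upwards [hba.eventually_ne hd] with i hi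
  rw [Pi.div_apply, div_eq_div_iff hi (hπ _), mul_comm, hrev]

section StepRatio

variable {p : ℝ → ℝ → ℝ} {π : ℝ → ℝ} {h c d : ℝ}

lemma tendsto_add_div_of_detailed_balance (hπ : ∀ x, π x ≠ 0)
    (hrev : ∀ x u, π x * p x u = π u * p u x) (hd : d ≠ 0)
    (hforward : Tendsto (fun x => p x (x + h)) atTop (𝓝 c))
    (hbackward : Tendsto (fun x => p x (x - h)) atTop (𝓝 d)) :
    Tendsto (fun x => π (x + h) / π x) atTop (𝓝 (c / d)) := by
  refine tendsto_div_of_detailed_balance hπ hrev hd hforward ?_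
  simpa only [Function.comp_def, id_eq, add_sub_cancel_right] using
    hbackward.comp (tendsto_atTop_add_const_right _ h tendsto_id)

lemma tendsto_neg_add_div_of_detailed_balance (hπ : ∀ x, π x ≠ 0)
    (hrev : ∀ x u, π x * p x u = π u * p u x) (hc : c ≠ 0)
    (hforward : Tendsto (fun x => p x (x + h)) atBot (𝓝 c))
    (hbackward : Tendsto (fun x => p x (x - h)) atBot (𝓝 d)) :
    Tendsto (fun x => π (-(x + h)) / π (-x)) atTop (𝓝 (d / c)) := by
  refine tendsto_div_of_detailed_balance hπ hrev hc ?_ ?_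
  · exact (hbackward.comp tendsto_neg_atTop_atBot).congr fun x => by
      rw [Function.comp_apply, neg_add']
  · have hshift : Tendsto (fun x : ℝ => x + h) atTop atTop :=
      tendsto_atTop_add_const_right _ h tendsto_id
    exact (hforward.comp (tendsto_neg_atTop_atBot.comp hshift)).congr fun x => by simp

end StepRatio

theorem random_walk_like_implies_heavy_tails_general {p : ℝ → ℝ → ℝ} {π : ℝ → ℝ} {h c d : ℝ}
    (hπ_pos : ∀ x, 0 < π x) (hπ_int : Integrable π)
    (hrev : ∀ x u, π x * p x u = π u * p u x) (hh : 0 < h) (hc : c ≠ 0) (hd : d ≠ 0)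
    (hforward : Tendsto (fun x => p x (x + h)) (cocompact ℝ) (𝓝 c))
    (hbackward : Tendsto (fun x => p x (x - h)) (cocompact ℝ) (𝓝 d)) :
    Tendsto (fun x => Real.log (∫ u in Ici x, π u) / x) atTop (𝓝 0) ∧
    Tendsto (fun x => Real.log (∫ u in Iic (-x), π u) / (-x)) atTop (𝓝 0) := by
  have hπ_ne x : π x ≠ 0 := (hπ_pos x).ne'
  have hright := tendsto_add_div_of_detailed_balance hπ_ne hrev hd
    (hforward.mono_left atTop_le_cocompact) (hbackward.mono_left atTop_le_cocompact)
  have hleft := tendsto_neg_add_div_of_detailed_balance hπ_ne hrev hc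
    (hforward.mono_left atBot_le_cocompact) (hbackward.mono_left atBot_le_cocompact)
  rw [← inv_div] at hleft
  have hratio : c / d = 1 := eq_one_of_tendsto_add_div_of_tendsto_neg_add_div hπ_int hπ_pos hh.le
    (div_ne_zero hc hd) hright hleft
  rw [hratio] at hright hleft
  rw [inv_one] at hleft
  constructor
  · simpa using tendsto_log_integral_Ici_div hπ_int hπ_pos hh one_ne_zero hright
  · have hreflected :=
      tendsto_log_integral_Ici_div hπ_int.comp_neg (fun x => hπ_pos (-x)) hh one_ne_zero hleft
    simpa [integral_Ici_eq_integral_Ioi, integral_comp_neg_Ioi, div_neg] using hreflected.neg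

/-- a reversible Markov chain on `ℝ` whose transition density is
random-walk-like in the tails has a stationary density with heavy tails, in the sense
that `log ∫_x^∞ π(u) du / x → 0` and `log ∫_{-∞}^{-x} π(u) du / (-x) → 0` as `x → ∞`. -/
theorem random_walk_like_implies_heavy_tails (p : ℝ → ℝ → ℝ) (π : ℝ → ℝ) (q : ℝ → ℝ)
    (hp_meas : Measurable (Function.uncurry p))
    (hp_nonneg : ∀ x u, 0 ≤ p x u)
    (hp_prob : ∀ x, ∫ u, p x u = 1)
    (hπ_pos : ∀ x, 0 < π x) (hπ_prob : ∫ x, π x = 1)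
    (hrev : ∀ x u, π x * p x u = π u * p u x)
    (hq_cont : Continuous q) (hq_pos : ∀ z, 0 < q z)
    (hq_sym : ∀ z, q (-z) = q z) (hq_prob : ∫ z, q z = 1)
    (hrw : ∀ z : ℝ, Tendsto (fun x => p x (x + z)) (cocompact ℝ) (nhds (q z))) :
    Tendsto (fun x => Real.log (∫ u in Ici x, π u) / x) atTop (nhds 0) ∧
    Tendsto (fun x => Real.log (∫ u in Iic (-x), π u) / (-x)) atTop (nhds 0) := by
  have hπ_int : Integrable π := .of_integral_ne_zero (hπ_prob.trans_ne one_ne_zero)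
  exact random_walk_like_implies_heavy_tails_general hπ_pos hπ_int hrev one_pos (hq_pos 1).ne'
    (hq_pos (-1)).ne' (hrw 1) (by simpa only [sub_eq_add_neg] using hrw (-1))
end
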